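/- Let μ be a Borel probability measure on SL₂(ℝ) with a finite exponential moment whose support generates a Zariski dense subgroup. There exists a constant C > 0 such that for all real numbers s, t, Σ_{n≥0} μ^{*n}{ g : κ(g) − t ∈ [0, s] } ≤ C · max{1, s²}. -/

import Mathlib

open MeasureTheory Filter

noncomputable section

abbrev SL2 := Matrix.SpecialLinearGroup (Fin 2) ℝ

abbrev PX := Projectivization ℝ (Fin 2 → ℝ)

instance : TopologicalSpace SL2 := instTopologicalSpaceSubtype
instance : TopologicalSpace PX := instTopologicalSpaceQuotient
instance : MeasurableSpace SL2 := borel _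
instance : MeasurableSpace PX := borel _

/-- Euclidean norm on ℝ². -/
def enorm2 (v : Fin 2 → ℝ) : ℝ := Real.sqrt (v 0 ^ 2 + v 1 ^ 2)

/-- Operator norm of g ∈ SL₂(ℝ) w.r.t. the Euclidean norm on ℝ². -/
def opNorm (g : SL2) : ℝ :=
  ‖Matrix.toEuclideanCLM (𝕜 := ℝ) (n := Fin 2) (g : Matrix (Fin 2) (Fin 2) ℝ)‖

/-- Cartan projection κ(g) = log ‖g‖. -/
def kappa (g : SL2) : ℝ := Real.log (opNorm g)

/-- The projective action of SL₂(ℝ) on ℙ(ℝ²). -/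
def act (g : SL2) (x : PX) : PX :=
  Projectivization.map ((Matrix.SpecialLinearGroup.toLin' g).toLinearMap)
    (LinearEquiv.injective _) x

/-- The norm cocycle σ(g, ℝv) = log (‖gv‖/‖v‖). -/
def cocycle (g : SL2) (x : PX) : ℝ :=
  Real.log (enorm2 ((g : Matrix (Fin 2) (Fin 2) ℝ).mulVec x.rep) / enorm2 x.rep)

/-- The sine distance d(ℝv, ℝw) = |det(v,w)|/(‖v‖‖w‖) on ℙ(ℝ²). -/
def projDist (x y : PX) : ℝ :=
  |x.rep 0 * y.rep 1 - x.rep 1 * y.rep 0| / (enorm2 x.rep * enorm2 y.rep)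

/-- An angle θ(x) ∈ ℝ representing x = ℝ(cos θ, sin θ). -/
def pangle (x : PX) : ℝ := Complex.arg (x.rep 0 + x.rep 1 * Complex.I)

/-- The (topological) support of a measure. -/
def measSupp (μ : Measure SL2) : Set SL2 :=
  {g | ∀ U : Set SL2, IsOpen U → g ∈ U → 0 < μ U}

/-- μ has a finite exponential moment. -/
def HasExpMoment (μ : Measure SL2) : Prop :=
  ∃ ε₁ > (0 : ℝ), ∫⁻ g, ENNReal.ofReal (opNorm g ^ ε₁) ∂μ < ⊤

/-- The group generated by the support of μ is Zariski dense in SL₂(ℝ),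
equivalently it is not solvable. -/
def ZariskiDense (μ : Measure SL2) : Prop :=
  ¬ IsSolvable (Subgroup.closure (measSupp μ))

/-- ν is μ-stationary: μ ∗ ν = ν. -/
def IsStationaryMeasure (μ : Measure SL2) (ν : Measure PX) : Prop :=
  μ.bind (fun g => ν.map (act g)) = ν

/-- The product g₁ ⋯ gₙ of a word (g₁, …, gₙ). -/
def word {n : ℕ} (g : Fin n → SL2) : SL2 := (List.ofFn g).prod

/-- The product measure μ^{⊗n} on words of length n. -/
def μpi (μ : Measure SL2) (n : ℕ) : Measure (Fin n → SL2) := Measure.pi fun _ => μ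

section

instance rnw_topgrp : IsTopologicalGroup SL2 :=
  @Matrix.SpecialLinearGroup.topologicalGroup (Fin 2) ℝ _ _ _ _ _
lemma rnw_emb : Topology.IsClosedEmbedding (fun g : SL2 => (g : Matrix (Fin 2) (Fin 2) ℝ)) :=
  @Matrix.SpecialLinearGroup.isClosedEmbedding_val (Fin 2) ℝ _ _ _ _ _ _
instance rnw_borel : BorelSpace SL2 := ⟨rfl⟩
instance rnw_sc : SecondCountableTopology SL2 := by
  have : SecondCountableTopology (Matrix (Fin 2) (Fin 2) ℝ) :=
    inferInstanceAs (SecondCountableTopology (Fin 2 → Fin 2 → ℝ))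
  exact rnw_emb.isEmbedding.secondCountableTopology
instance rnw_t2 : T2Space SL2 := by
  exact rnw_emb.isEmbedding.t2Space
instance rnw_mm : MeasurableMul₂ SL2 := inferInstance

abbrev EV := EuclideanSpace ℝ (Fin 2)

def LL (g : SL2) : EV →L[ℝ] EV :=
  Matrix.toEuclideanCLM (𝕜 := ℝ) (n := Fin 2) (g : Matrix (Fin 2) (Fin 2) ℝ)

lemma opNorm_eq (g : SL2) : opNorm g = ‖LL g‖ := rfl
lemma LL_mul (g h : SL2) : LL (g * h) = LL g * LL h := by simp [LL]
lemma LL_mul_apply (g h : SL2) (v : EV) : LL (g * h) v = LL g (LL h v) := by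
  rw [LL_mul]; rfl
lemma LL_one : LL 1 = 1 := by simp [LL]
lemma LL_one_apply (v : EV) : LL 1 v = v := by rw [LL_one]; rfl
lemma LL_apply0 (g : SL2) (v : EV) : LL g v 0 = g 0 0 * v 0 + g 0 1 * v 1 := by
  simp [LL, Matrix.mulVec, dotProduct, Matrix.ofLp_toEuclideanCLM]
lemma LL_apply1 (g : SL2) (v : EV) : LL g v 1 = g 1 0 * v 0 + g 1 1 * v 1 := by
  simp [LL, Matrix.mulVec, dotProduct, Matrix.ofLp_toEuclideanCLM]

lemma LL_cont : Continuous LL := by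
  have h : Continuous (Matrix.toEuclideanCLM (𝕜 := ℝ) (n := Fin 2)).toAlgEquiv.toLinearMap :=
    LinearMap.continuous_of_finiteDimensional _
  exact h.comp rnw_emb.continuous

@[fun_prop] lemma LL_cont' {X : Type*} [TopologicalSpace X] {f : X → SL2} (hf : Continuous f) :
    Continuous (fun x => LL (f x)) := LL_cont.comp hf

lemma SL2_det (g : SL2) : g 0 0 * g 1 1 - g 0 1 * g 1 0 = 1 := by
  have := g.det_coe; rwa [Matrix.det_fin_two] at this

lemma EV_norm_sq (v : EV) : ‖v‖ ^ 2 = v 0 ^ 2 + v 1 ^ 2 := by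
  rw [EuclideanSpace.norm_sq_eq]; simp [Fin.sum_univ_two]

lemma LL_inv_apply (g : SL2) (v : EV) : LL g⁻¹ (LL g v) = v := by
  rw [← LL_mul_apply, inv_mul_cancel, LL_one_apply]
lemma LL_apply_inv (g : SL2) (v : EV) : LL g (LL g⁻¹ v) = v := by
  rw [← LL_mul_apply, mul_inv_cancel, LL_one_apply]

def JJ (v : EV) : EV := !₂[- v 1, v 0]
lemma JJ_norm (v : EV) : ‖JJ v‖ = ‖v‖ := by
  have : ‖JJ v‖ ^ 2 = ‖v‖ ^ 2 := by rw [EV_norm_sq, EV_norm_sq]; simp [JJ]; ring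
  exact (sq_eq_sq₀ (norm_nonneg _) (norm_nonneg _)).1 this

/-- transpose as an element of SL2 -/
def TT (g : SL2) : SL2 := g.transpose

lemma TT_apply (g : SL2) (i j : Fin 2) : (TT g) i j = g j i := by
  simp [TT]

lemma inner_TT (g : SL2) (v w : EV) : inner ℝ w (LL g v) = inner ℝ (LL (TT g) w) v := by
  simp [PiLp.inner_apply, Fin.sum_univ_two, LL_apply0, LL_apply1, TT_apply]; ring

lemma norm_TT (g : SL2) : ‖LL (TT g)‖ = ‖LL g‖ := by
  have : LL (TT g) = ContinuousLinearMap.adjoint (LL g) := by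
    rw [ContinuousLinearMap.eq_adjoint_iff]
    intro x y
    rw [← inner_TT]
  rw [this]; exact LinearIsometryEquiv.norm_map _ _

lemma LL_inv_J (g : SL2) (v : EV) : LL g⁻¹ (JJ v) = JJ (LL (TT g) v) := by
  have h00 : (g⁻¹ : SL2) 0 0 = g 1 1 := by simp [Matrix.SpecialLinearGroup.SL2_inv_expl]
  have h01 : (g⁻¹ : SL2) 0 1 = - g 0 1 := by simp [Matrix.SpecialLinearGroup.SL2_inv_expl]
  have h10 : (g⁻¹ : SL2) 1 0 = - g 1 0 := by simp [Matrix.SpecialLinearGroup.SL2_inv_expl]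
  have h11 : (g⁻¹ : SL2) 1 1 = g 0 0 := by simp [Matrix.SpecialLinearGroup.SL2_inv_expl]
  ext i; fin_cases i
  · show LL g⁻¹ (JJ v) 0 = _
    rw [LL_apply0, h00, h01]; simp [JJ, LL_apply1, TT_apply]; try ring
  · show LL g⁻¹ (JJ v) 1 = _
    rw [LL_apply1, h10, h11]; simp [JJ, LL_apply0, TT_apply]; try ring

lemma JJ_JJ (v : EV) : JJ (JJ v) = - v := by
  ext i; fin_cases i <;> simp [JJ]

lemma norm_inv_le (g : SL2) : ‖LL g⁻¹‖ ≤ ‖LL g‖ := by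
  refine ContinuousLinearMap.opNorm_le_bound _ (norm_nonneg _) fun v => ?_
  have h : v = JJ (- JJ v) := by
    ext i; fin_cases i <;> simp [JJ]
  conv_lhs => rw [h, LL_inv_J, JJ_norm]
  refine ((LL (TT g)).le_opNorm _).trans ?_
  rw [norm_TT, norm_neg, JJ_norm]

lemma norm_inv_eq (g : SL2) : ‖LL g⁻¹‖ = ‖LL g‖ :=
  le_antisymm (norm_inv_le g) (by simpa using norm_inv_le g⁻¹)

lemma norm_lower (g : SL2) (v : EV) : ‖v‖ ≤ ‖LL g‖ * ‖LL g v‖ := by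
  have := (LL g⁻¹).le_opNorm (LL g v)
  rwa [LL_inv_apply, norm_inv_eq] at this

lemma LLnorm_mul_le (g h : SL2) : ‖LL (g * h)‖ ≤ ‖LL g‖ * ‖LL h‖ := by
  rw [LL_mul]; exact norm_mul_le _ _

lemma one_le_norm (g : SL2) : 1 ≤ ‖LL g‖ := by
  have h := LLnorm_mul_le g g⁻¹
  rw [mul_inv_cancel, LL_one, norm_inv_eq, norm_one] at h
  nlinarith [norm_nonneg (LL g)]

lemma LLnorm_pos (g : SL2) : 0 < ‖LL g‖ := one_pos.trans_le (one_le_norm g)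

lemma LL_ne (g : SL2) {v : EV} (hv : v ≠ 0) : LL g v ≠ 0 := by
  intro h
  have := norm_lower g v
  rw [h, norm_zero, mul_zero] at this
  exact hv (norm_le_zero_iff.1 this)

/-- a unit vector at which the operator norm is attained -/
lemma exists_max (g : SL2) : ∃ v : EV, ‖v‖ = 1 ∧ ‖LL g v‖ = ‖LL g‖ := by
  have hne : (Metric.sphere (0 : EV) 1).Nonempty := NormedSpace.sphere_nonempty.2 zero_le_one
  obtain ⟨v, hv, hm⟩ := (isCompact_sphere (0 : EV) 1).exists_isMaxOn hne
    (f := fun v => ‖LL g v‖) (by fun_prop)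
  have hv1 : ‖v‖ = 1 := by simpa using hv
  refine ⟨v, hv1, le_antisymm ?_ ?_⟩
  · simpa [hv1] using (LL g).le_opNorm v
  · refine ContinuousLinearMap.opNorm_le_of_unit_norm (norm_nonneg _) fun x hx => ?_
    exact hm (by simpa using hx)

/-- expansion away from the contracted direction -/
lemma exists_dir (g : SL2) : ∃ w : EV, ‖w‖ = 1 ∧ ∀ v, ‖LL g‖ * |inner ℝ w v| ≤ ‖LL g v‖ := by
  obtain ⟨y, hy, hym⟩ := exists_max (TT g)
  rw [norm_TT] at hym
  have hp := LLnorm_pos g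
  refine ⟨‖LL g‖⁻¹ • LL (TT g) y, ?_, fun v => ?_⟩
  · rw [norm_smul, hym, norm_inv, norm_norm, inv_mul_cancel₀ hp.ne']
  · rw [real_inner_smul_left, ← inner_TT, abs_mul, abs_inv, abs_norm, mul_inv_cancel_left₀ hp.ne']
    simpa [hy] using abs_real_inner_le_norm y (LL g v)

lemma kappa_nonneg (g : SL2) : 0 ≤ kappa g := Real.log_nonneg (one_le_norm g)
lemma kappa_mul (g h : SL2) : kappa (g * h) ≤ kappa g + kappa h := by
  unfold kappa; rw [opNorm_eq, opNorm_eq, opNorm_eq, ← Real.log_mul (LLnorm_pos g).ne' (LLnorm_pos h).ne']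
  exact Real.log_le_log (LLnorm_pos _) (LLnorm_mul_le g h)
lemma kappa_inv (g : SL2) : kappa g⁻¹ = kappa g := by
  unfold kappa; rw [opNorm_eq, norm_inv_eq]; rfl
lemma kappa_one : kappa 1 = 0 := by
  unfold kappa; rw [opNorm_eq, LL_one, norm_one, Real.log_one]
lemma kappa_cont : Continuous kappa := by
  unfold kappa
  refine Continuous.log ?_ (fun g => (LLnorm_pos g).ne')
  exact (LL_cont).norm
lemma exp_kappa (g : SL2) : Real.exp (kappa g) = ‖LL g‖ := Real.exp_log (LLnorm_pos g)

/-- signed expansion -/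
def sg (g : SL2) (v : EV) : ℝ := Real.log ‖LL g v‖ - Real.log ‖v‖

lemma sg_mul (g h : SL2) (v : EV) : sg (g * h) v = sg g (LL h v) + sg h v := by
  unfold sg; rw [LL_mul_apply]; ring
lemma sg_abs (g : SL2) {v : EV} (hv : v ≠ 0) : |sg g v| ≤ kappa g := by
  have h1 : 0 < ‖v‖ := norm_pos_iff.2 hv
  have h2 : 0 < ‖LL g v‖ := norm_pos_iff.2 (LL_ne g hv)
  have h3 := LLnorm_pos g
  unfold sg kappa; rw [opNorm_eq, abs_le]
  constructor
  · have := Real.log_le_log h1 (norm_lower g v)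
    rw [Real.log_mul h3.ne' h2.ne'] at this; linarith
  · have := Real.log_le_log h2 ((LL g).le_opNorm v)
    rw [Real.log_mul h3.ne' h1.ne'] at this; linarith
lemma sg_cont {v : EV} (hv : v ≠ 0) : Continuous (fun g => sg g v) := by
  unfold sg
  refine Continuous.sub (Continuous.log ?_ fun g => (norm_pos_iff.2 (LL_ne g hv)).ne') continuous_const
  exact (LL_cont.clm_apply continuous_const).norm

lemma sg_good (g : SL2) : ∃ w : EV, ‖w‖ = 1 ∧ ∀ v, v ≠ 0 → ∀ η > (0:ℝ), η * ‖v‖ < |inner ℝ w v| →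
    kappa g + Real.log η ≤ sg g v := by
  obtain ⟨w, hw, h⟩ := exists_dir g
  refine ⟨w, hw, fun v hv η hη hb => ?_⟩
  have h1 : 0 < ‖v‖ := norm_pos_iff.2 hv
  have h3 := LLnorm_pos g
  have := Real.log_le_log (by positivity) ((mul_le_mul_of_nonneg_left hb.le h3.le).trans (h v))
  rw [Real.log_mul h3.ne' (by positivity), Real.log_mul hη.ne' h1.ne'] at this
  unfold sg kappa; rw [opNorm_eq]; linarith

lemma compact_kappa (R : ℝ) : IsCompact {g : SL2 | kappa g ≤ R} := by
  have hcl : IsClosed {g : SL2 | kappa g ≤ R} := isClosed_le kappa_cont continuous_const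
  have hbox : IsCompact (Set.univ.pi fun _ : Fin 2 => Set.univ.pi fun _ : Fin 2 =>
      Set.Icc (-Real.exp R) (Real.exp R)) :=
    isCompact_univ_pi fun _ => isCompact_univ_pi fun _ => isCompact_Icc
  refine IsCompact.of_isClosed_subset (rnw_emb.isCompact_preimage (K := _) hbox) hcl ?_
  intro g hg
  have hn : ‖LL g‖ ≤ Real.exp R := by rw [← exp_kappa]; exact Real.exp_le_exp.2 hg
  have key : ∀ i j : Fin 2, |g i j| ≤ ‖LL g‖ := by
    intro i j
    have h1 := (LL g).le_opNorm (EuclideanSpace.single j 1)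
    have h2 : g i j = LL g (EuclideanSpace.single j 1) i := by
      fin_cases i <;> fin_cases j <;> simp [LL_apply0, LL_apply1]
    rw [h2, ← Real.norm_eq_abs]
    refine (PiLp.norm_apply_le _ _).trans (h1.trans ?_)
    simp
  intro i _ j _
  have := (key i j).trans hn
  exact abs_le.1 this


end

section

open scoped ENNReal

/-- convolution powers -/
def nu (μ : Measure SL2) : ℕ → Measure SL2
  | 0 => Measure.dirac 1
  | n + 1 => (nu μ n) ∗ₘ μ

instance nu_prob (μ : Measure SL2) [IsProbabilityMeasure μ] (n : ℕ) :
    IsProbabilityMeasure (nu μ n) := by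
  induction n with
  | zero => unfold nu; infer_instance
  | succ n ih => unfold nu; infer_instance

lemma nu_one (μ : Measure SL2) [IsProbabilityMeasure μ] : nu μ 1 = μ := by
  show (Measure.dirac 1) ∗ₘ μ = μ
  rw [Measure.dirac_one_mconv]

lemma nu_add (μ : Measure SL2) [IsProbabilityMeasure μ] (m n : ℕ) :
    nu μ (m + n) = nu μ m ∗ₘ nu μ n := by
  induction n with
  | zero => show nu μ m = nu μ m ∗ₘ Measure.dirac 1; rw [Measure.mconv_dirac_one]
  | succ n ih =>
    show nu μ (m + n) ∗ₘ μ = nu μ m ∗ₘ (nu μ n ∗ₘ μ)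
    rw [ih, Measure.mconv_assoc]

lemma lint_nu_add (μ : Measure SL2) [IsProbabilityMeasure μ] (m n : ℕ) {f : SL2 → ℝ≥0∞}
    (hf : Measurable f) :
    ∫⁻ x, f x ∂(nu μ (m + n)) = ∫⁻ h, ∫⁻ h', f (h' * h) ∂(nu μ m) ∂(nu μ n) := by
  rw [nu_add, Measure.lintegral_mconv_eq_lintegral_prod hf,
    lintegral_prod_symm' _ (by fun_prop)]

lemma nu_add_apply (μ : Measure SL2) [IsProbabilityMeasure μ] (m n : ℕ) {A : Set SL2}
    (hA : MeasurableSet A) :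
    nu μ (m + n) A = ∫⁻ h, nu μ m {h' | h' * h ∈ A} ∂(nu μ n) := by
  rw [← lintegral_indicator_one hA, lint_nu_add μ m n (measurable_one.indicator hA)]
  refine lintegral_congr fun h => ?_
  have hm : MeasurableSet {h' | h' * h ∈ A} := hA.preimage (measurable_mul_const h)
  rw [← lintegral_indicator_one hm]
  rfl

lemma word_map (μ : Measure SL2) [IsProbabilityMeasure μ] (n : ℕ) :
    (μpi μ n).map word = nu μ n := by
  have hmw : ∀ n, Measurable (word : (Fin n → SL2) → SL2) := by
    intro n
    induction n with
    | zero => exact measurable_const' (fun x y => by simp [word])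
    | succ n ih =>
      have : (word : (Fin (n+1) → SL2) → SL2) = fun g => g 0 * word (fun i => g i.succ) := by
        funext g; simp [word, List.ofFn_succ]
      rw [this]
      exact (measurable_pi_apply _).mul (ih.comp (by fun_prop))
  induction n with
  | zero =>
    unfold μpi
    rw [Measure.pi_of_empty (fun _ : Fin 0 => μ), Measure.map_dirac' (hmw 0)]
    simp [word, nu]
  | succ n ih =>
    have hmp := (measurePreserving_piFinSuccAbove (fun _ : Fin (n+1) => μ) 0)
    have e : (word : (Fin (n+1) → SL2) → SL2) = (fun p : SL2 × (Fin n → SL2) => p.1 * word p.2) ∘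
        (MeasurableEquiv.piFinSuccAbove (fun _ : Fin (n+1) => SL2) 0) := by
      funext g; simp [word, List.ofFn_succ, MeasurableEquiv.piFinSuccAbove]; rfl
    have hm : Measurable (fun p : SL2 × (Fin n → SL2) => p.1 * word p.2) :=
      measurable_fst.mul ((hmw n).comp measurable_snd)
    rw [e, ← Measure.map_map hm (MeasurableEquiv.measurable _)]
    unfold μpi
    rw [hmp.map_eq]
    have h2 : nu μ (n + 1) = μ ∗ₘ nu μ n := by rw [add_comm, nu_add, nu_one]
    rw [h2, ← ih, Measure.mconv]
    have h3 : μ.prod ((μpi μ n).map word) = (μ.prod (μpi μ n)).map (Prod.map id word) := by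
      have : IsProbabilityMeasure (μpi μ n) := by unfold μpi; infer_instance
      rw [← Measure.map_prod_map _ _ measurable_id (hmw n), Measure.map_id]
    rw [h3, Measure.map_map (by fun_prop) (measurable_id.prodMap (hmw n))]
    rfl

lemma word_meas (n : ℕ) : Measurable (word : (Fin n → SL2) → SL2) := by
  induction n with
  | zero => exact measurable_const' (fun x y => by simp [word])
  | succ n ih =>
    have : (word : (Fin (n+1) → SL2) → SL2) = fun g => g 0 * word (fun i => g i.succ) := by
      funext g; simp [word, List.ofFn_succ]
    rw [this]
    exact (measurable_pi_apply _).mul (ih.comp (by fun_prop))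

lemma μpi_apply (μ : Measure SL2) [IsProbabilityMeasure μ] (n : ℕ) {A : Set SL2}
    (hA : MeasurableSet A) : μpi μ n {g | word g ∈ A} = nu μ n A := by
  rw [← word_map, Measure.map_apply (word_meas n) hA]; rfl

/-- Renewal step: bounded return expectation gives a uniform bound. -/
lemma renewal_step (μ : Measure SL2) [IsProbabilityMeasure μ] (K : ℝ≥0∞)
    (hK : ∀ v : EV, v ≠ 0 → ∑' n, nu μ n {h | sg h v ≤ 1} ≤ K) (t : ℝ) :
    ∑' n, nu μ n {g | kappa g - t ∈ Set.Icc (0:ℝ) 1} ≤ K := by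
  set W : Set SL2 := {g | kappa g - t ∈ Set.Icc (0:ℝ) 1} with hW
  have hWm : MeasurableSet W :=
    measurableSet_Icc.preimage (kappa_cont.measurable.sub_const t)
  have key : ∀ N : ℕ, ∀ γ : SL2, ∑ n ∈ Finset.range N, nu μ n {h | h * γ ∈ W} ≤ K := by
    intro N
    induction N with
    | zero => simp
    | succ N ih =>
      intro γ
      by_cases hγ : γ ∈ W
      · obtain ⟨y, hy, hmax⟩ := exists_max γ
        have hy0 : y ≠ 0 := by rintro rfl; simp at hy
        refine le_trans ?_ (hK (LL γ y) (LL_ne γ hy0))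
        refine le_trans ?_ (ENNReal.sum_le_tsum (Finset.range (N+1)))
        refine Finset.sum_le_sum fun n _ => measure_mono fun h hh => ?_
        have h1 : Real.log ‖LL (h * γ) y‖ ≤ kappa (h * γ) := by
          refine Real.log_le_log (norm_pos_iff.2 (LL_ne _ hy0)) ?_
          simpa [hy, opNorm_eq] using (LL (h * γ)).le_opNorm y
        have h2 : Real.log ‖LL γ y‖ = kappa γ := by rw [hmax]; rfl
        show sg h (LL γ y) ≤ 1
        unfold sg
        rw [← LL_mul_apply, h2]
        have h3 := hh.2
        have h4 := hγ.1
        linarith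
      · rw [Finset.sum_range_succ']
        have h0 : nu μ 0 {h | h * γ ∈ W} = 0 := by
          have hm : MeasurableSet {h | h * γ ∈ W} := hWm.preimage (measurable_mul_const γ)
          show (Measure.dirac 1) {h | h * γ ∈ W} = 0
          rw [Measure.dirac_apply' _ hm]
          simp [hγ]
        rw [h0, add_zero]
        have : ∀ n, nu μ (n+1) {h | h * γ ∈ W} = ∫⁻ g, nu μ n {h | h * (g * γ) ∈ W} ∂μ := by
          intro n
          have hm : MeasurableSet {h | h * γ ∈ W} := hWm.preimage (measurable_mul_const γ)
          rw [nu_add_apply μ n 1 hm, nu_one]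
          refine lintegral_congr fun g => ?_
          simp [mul_assoc]
        simp_rw [this]
        rw [← lintegral_finsetSum']
        · calc _ ≤ ∫⁻ g, K ∂μ := lintegral_mono fun g => ih (g * γ)
            _ = K := by simp
        · intro n _
          have hms : MeasurableSet {p : SL2 × SL2 | p.2 * (p.1 * γ) ∈ W} :=
            hWm.preimage (by fun_prop)
          exact (measurable_measure_prodMk_left (ν := nu μ n) hms).aemeasurable
  refine ENNReal.tsum_le_of_sum_range_le fun N => ?_
  simpa using key N 1

lemma final_step (μ : Measure SL2) [IsProbabilityMeasure μ] (K : ℝ) (hK0 : 0 ≤ K)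
    (hK : ∀ v : EV, v ≠ 0 → ∑' n, nu μ n {h | sg h v ≤ 1} ≤ ENNReal.ofReal K) :
    ∃ C > (0 : ℝ), ∀ s t : ℝ,
      (∑' n : ℕ, μpi μ n {g | kappa (word g) - t ∈ Set.Icc 0 s}) ≤
        ENNReal.ofReal (C * max 1 (s ^ 2)) := by
  refine ⟨2 * K + 1, by positivity, fun s t => ?_⟩
  have hm : ∀ s t : ℝ, MeasurableSet {g | kappa g - t ∈ Set.Icc (0:ℝ) s} := fun s t =>
    measurableSet_Icc.preimage (kappa_cont.measurable.sub_const t)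
  have e : ∀ n, μpi μ n {g | kappa (word g) - t ∈ Set.Icc 0 s}
      = nu μ n {g | kappa g - t ∈ Set.Icc 0 s} := fun n => μpi_apply μ n (hm s t)
  simp_rw [e]
  rcases lt_or_ge s 0 with hs | hs
  · have : {g | kappa g - t ∈ Set.Icc 0 s} = ∅ := by
      rw [Set.Icc_eq_empty (by linarith)]; simp
    simp_rw [this]; simp
  have hcov : {g | kappa g - t ∈ Set.Icc 0 s} ⊆
      ⋃ j ∈ Finset.range (⌊s⌋₊ + 1), {g | kappa g - (t + j) ∈ Set.Icc (0:ℝ) 1} := by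
    intro g hg
    simp only [Set.mem_iUnion, Finset.mem_range]
    refine ⟨⌊kappa g - t⌋₊, Nat.lt_succ_of_le (Nat.floor_le_floor hg.2), ?_⟩
    have h1 := Nat.floor_le hg.1
    have h2 := Nat.lt_floor_add_one (kappa g - t)
    constructor <;> linarith
  calc ∑' n, nu μ n {g | kappa g - t ∈ Set.Icc 0 s}
      ≤ ∑' n, ∑ j ∈ Finset.range (⌊s⌋₊ + 1), nu μ n {g | kappa g - (t + j) ∈ Set.Icc (0:ℝ) 1} :=
        ENNReal.tsum_le_tsum fun n => (measure_mono hcov).trans (measure_biUnion_finset_le _ _)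
    _ = ∑ j ∈ Finset.range (⌊s⌋₊ + 1), ∑' n, nu μ n {g | kappa g - (t + j) ∈ Set.Icc (0:ℝ) 1} :=
        Summable.tsum_finsetSum fun _ _ => ENNReal.summable
    _ ≤ ∑ j ∈ Finset.range (⌊s⌋₊ + 1), ENNReal.ofReal K :=
        Finset.sum_le_sum fun j _ => renewal_step μ _ hK _
    _ = ENNReal.ofReal ((⌊s⌋₊ + 1) * K) := by
        rw [Finset.sum_const, Finset.card_range, nsmul_eq_mul,
          ENNReal.ofReal_mul (by positivity)]
        congr 1
        rw [← Nat.cast_succ, ENNReal.ofReal_natCast]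
    _ ≤ _ := by
        refine ENNReal.ofReal_le_ofReal ?_
        have h1 := Nat.floor_le hs
        have h2 : s + 1 ≤ 2 * max 1 (s ^ 2) := by
          rcases le_total s 1 with h | h
          · linarith [le_max_left 1 (s ^ 2)]
          · nlinarith [le_max_right 1 (s ^ 2)]
        have h3 : 1 ≤ max 1 (s ^ 2) := le_max_left _ _
        nlinarith [mul_le_mul_of_nonneg_right (show (⌊s⌋₊ + 1 : ℝ) ≤ s + 1 by linarith) hK0,
          mul_le_mul_of_nonneg_right h2 hK0]


end

section

open scoped ENNReal

lemma exp_quad (y : ℝ) : Real.exp y ≤ 1 + y + y ^ 2 * Real.exp |y| := by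
  rcases le_or_gt |y| 1 with h | h
  · have h1 := (abs_le.1 (Real.abs_exp_sub_one_sub_id_le h)).2
    have h2 : 1 ≤ Real.exp |y| := Real.one_le_exp (abs_nonneg y)
    nlinarith [sq_nonneg y]
  · have h0 : 1 ≤ y ^ 2 := by rw [← sq_abs]; nlinarith
    rcases le_total 0 y with hy | hy
    · rw [abs_of_nonneg hy] at h ⊢
      nlinarith [Real.exp_pos y]
    · rw [abs_of_nonpos hy] at h ⊢
      have h2 : 1 ≤ Real.exp (-y) := Real.one_le_exp (by linarith)
      have h3 : Real.exp y ≤ 1 := Real.exp_le_one_iff.2 hy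
      nlinarith

lemma mom_int (μ : Measure SL2) [IsProbabilityMeasure μ] {ε : ℝ}
    (hε : ∫⁻ g, ENNReal.ofReal (opNorm g ^ ε) ∂μ < ⊤) (hε0 : 0 < ε) (n : ℕ) :
    Integrable (fun g => Real.exp (ε * kappa g)) (nu μ n) := by
  have hc : Continuous (fun g => Real.exp (ε * kappa g)) := by
    have := kappa_cont; fun_prop
  have hm : Measurable (fun g => ENNReal.ofReal (Real.exp (ε * kappa g))) := by
    have := hc.measurable; fun_prop
  have hfin : ∀ n, ∫⁻ g, ENNReal.ofReal (Real.exp (ε * kappa g)) ∂(nu μ n) < ⊤ := by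
    intro n
    induction n with
    | zero =>
      show ∫⁻ g, ENNReal.ofReal (Real.exp (ε * kappa g)) ∂(Measure.dirac 1) < ⊤
      rw [lintegral_dirac' _ hm]; exact ENNReal.ofReal_lt_top
    | succ n ih =>
      rw [lint_nu_add μ n 1 hm, nu_one]
      have hmu : ∫⁻ g, ENNReal.ofReal (Real.exp (ε * kappa g)) ∂μ < ⊤ := by
        convert hε using 4 with g
        rw [opNorm_eq, Real.rpow_def_of_pos (LLnorm_pos g), mul_comm]; rfl
      calc _ ≤ ∫⁻ h, ∫⁻ h', ENNReal.ofReal (Real.exp (ε * kappa h')) *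
            ENNReal.ofReal (Real.exp (ε * kappa h)) ∂(nu μ n) ∂μ := by
            refine lintegral_mono fun h => lintegral_mono fun h' => ?_
            rw [← ENNReal.ofReal_mul (Real.exp_pos _).le, ← Real.exp_add]
            refine ENNReal.ofReal_le_ofReal (Real.exp_le_exp.2 ?_)
            nlinarith [kappa_mul h' h]
        _ = ∫⁻ h, (∫⁻ h', ENNReal.ofReal (Real.exp (ε * kappa h')) ∂(nu μ n)) *
            ENNReal.ofReal (Real.exp (ε * kappa h)) ∂μ := by
            refine lintegral_congr fun h => lintegral_mul_const _ hm
        _ = _ := lintegral_const_mul _ hm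
        _ < ⊤ := ENNReal.mul_lt_top ih hmu
  refine ⟨hc.aestronglyMeasurable, ?_⟩
  rw [hasFiniteIntegral_iff_ofReal (Eventually.of_forall fun g => (Real.exp_pos _).le)]
  exact hfin n

lemma kappa_int (μ : Measure SL2) [IsProbabilityMeasure μ] (hmom : HasExpMoment μ) (n : ℕ) :
    Integrable kappa (nu μ n) := by
  obtain ⟨ε, hε0, hε⟩ := hmom
  refine Integrable.mono' ((mom_int μ hε hε0 n).const_mul ε⁻¹)
    kappa_cont.aestronglyMeasurable (Eventually.of_forall fun g => ?_)
  rw [Real.norm_of_nonneg (kappa_nonneg g), ← div_eq_inv_mul, le_div_iff₀ hε0]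
  linarith [Real.add_one_le_exp (ε * kappa g)]

lemma sg_int (μ : Measure SL2) [IsProbabilityMeasure μ] (hmom : HasExpMoment μ) (n : ℕ)
    {v : EV} (hv : v ≠ 0) : Integrable (fun g => sg g v) (nu μ n) :=
  (kappa_int μ hmom n).mono' (sg_cont hv).aestronglyMeasurable
    (Eventually.of_forall fun g => sg_abs g hv)

lemma int_nu_add (μ : Measure SL2) [IsProbabilityMeasure μ] (m n : ℕ) {f : SL2 → ℝ}
    (hc : Continuous f) (hf : Integrable f (nu μ (m + n))) :
    Integrable (fun p : SL2 × SL2 => f (p.1 * p.2)) ((nu μ m).prod (nu μ n)) ∧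
    ∫ x, f x ∂(nu μ (m + n)) = ∫ p, f (p.1 * p.2) ∂((nu μ m).prod (nu μ n)) := by
  rw [nu_add, Measure.mconv] at hf
  have hm : AEMeasurable (fun p : SL2 × SL2 => p.1 * p.2) ((nu μ m).prod (nu μ n)) :=
    measurable_mul.aemeasurable
  constructor
  · exact hf.comp_aemeasurable hm
  · rw [nu_add, Measure.mconv, integral_map hm hc.aestronglyMeasurable]

lemma inner_meas (v w : EV) (η : ℝ) :
    MeasurableSet {h : SL2 | |inner ℝ w (LL h v)| ≤ η * ‖LL h v‖} := by
  refine (isClosed_le ?_ ?_).measurableSet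
  · exact (continuous_const.inner (LL_cont.clm_apply continuous_const)).abs
  · exact continuous_const.mul (LL_cont.clm_apply continuous_const).norm

lemma stepD (μ : Measure SL2) [IsProbabilityMeasure μ] (hmom : HasExpMoment μ)
    (hB : ∃ N : ℕ, 0 < N ∧ ∃ η : ℝ, 0 < η ∧ η ≤ 1 ∧ ∀ v w : EV, v ≠ 0 → ‖w‖ = 1 →
      ∑ n ∈ Finset.range N, (nu μ n).real {h | |inner ℝ w (LL h v)| ≤ η * ‖LL h v‖} ≤ 9 / 20 * N)
    (hC : ∀ R : ℝ, ∃ m, R ≤ ∫ g, kappa g ∂(nu μ m)) :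
    ∃ N, ∀ v : EV, v ≠ 0 → 1 ≤ ∫ g, sg g v ∂(nu μ N) := by
  obtain ⟨N, hN, η, hη, hη1, hb⟩ := hB
  set K2 : ℝ := ∑ n ∈ Finset.range (N + 1), ∫ g, kappa g ∂(nu μ n) with hK2
  have hKn : ∀ n, 0 ≤ ∫ g, kappa g ∂(nu μ n) := fun n => integral_nonneg kappa_nonneg
  have hK2n : ∀ n ≤ N, ∫ g, kappa g ∂(nu μ n) ≤ K2 := fun n hn =>
    Finset.single_le_sum (f := fun n => ∫ g, kappa g ∂(nu μ n)) (fun i _ => hKn i)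
      (Finset.mem_range.2 (Nat.lt_succ_of_le hn))
  obtain ⟨m, hm⟩ := hC (10 * (1 - Real.log η + 2 * K2))
  refine ⟨m + N, fun v hv => ?_⟩
  have hlog : Real.log η ≤ 0 := Real.log_nonpos hη.le hη1
  have lowf : ∀ n ≤ N, -K2 ≤ ∫ g, sg g v ∂(nu μ n) := by
    intro n hn
    have : -∫ g, kappa g ∂(nu μ n) ≤ ∫ g, sg g v ∂(nu μ n) := by
      rw [← integral_neg]
      exact integral_mono (kappa_int μ hmom n).neg (sg_int μ hmom n hv)
        fun g => (abs_le.1 (sg_abs g hv)).1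
    linarith [hK2n n hn]
  -- comparison of different times
  have h1 : ∀ n ∈ Finset.range N,
      ∫ g, sg g v ∂(nu μ (m + n)) - K2 ≤ ∫ g, sg g v ∂(nu μ (m + N)) := by
    intro n hn
    have hn' := Finset.mem_range.1 hn
    have e : m + N = (N - n) + (m + n) := by omega
    rw [e]
    obtain ⟨hi, he⟩ := int_nu_add μ (N - n) (m + n) (sg_cont hv) (sg_int μ hmom _ hv)
    rw [he]
    have i1 : Integrable (fun p : SL2 × SL2 => sg p.2 v) ((nu μ (N - n)).prod (nu μ (m + n))) :=
      (sg_int μ hmom (m + n) hv).comp_snd _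
    have i2 : Integrable (fun p : SL2 × SL2 => kappa p.1) ((nu μ (N - n)).prod (nu μ (m + n))) :=
      (kappa_int μ hmom (N - n)).comp_fst _
    have := integral_mono (i1.sub i2) hi (fun p => by
      have := (abs_le.1 (sg_abs p.1 (LL_ne p.2 hv))).1
      simp only [sg_mul, Pi.sub_apply]; linarith)
    simp only [Pi.sub_apply] at this
    rw [integral_sub i1 i2, integral_fun_snd (fun g => sg g v), integral_fun_fst kappa] at this
    simp at this
    linarith [hK2n (N - n) (by omega)]
  -- main lower bound
  have h2 : N * ((∫ g, kappa g ∂(nu μ m)) / 10 + Real.log η) + ∑ n ∈ Finset.range N,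
      ∫ g, sg g v ∂(nu μ n) ≤ ∑ n ∈ Finset.range N, ∫ g, sg g v ∂(nu μ (m + n)) := by
    have hi := fun n => (int_nu_add μ m n (sg_cont hv) (sg_int μ hmom _ hv)).1
    have he : ∀ n, ∫ g, sg g v ∂(nu μ (m + n)) =
        ∫ h', ∫ h, sg (h' * h) v ∂(nu μ n) ∂(nu μ m) := fun n => by
      rw [(int_nu_add μ m n (sg_cont hv) (sg_int μ hmom _ hv)).2, integral_prod _ (hi n)]
    simp_rw [he]
    rw [← integral_finsetSum _ (fun n _ => (hi n).integral_prod_left)]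
    have hk := kappa_int μ hmom m
    have e3 : N * ((∫ g, kappa g ∂(nu μ m)) / 10 + Real.log η) + ∑ n ∈ Finset.range N,
      ∫ g, sg g v ∂(nu μ n) = ∫ h', (N * (kappa h' / 10 + Real.log η) + ∑ n ∈ Finset.range N,
      ∫ g, sg g v ∂(nu μ n)) ∂(nu μ m) := by
      have i1 : Integrable (fun h' => kappa h' / 10 + Real.log η) (nu μ m) :=
        (hk.div_const 10).add (integrable_const _)
      have i2 : Integrable (fun h' => (N:ℝ) * (kappa h' / 10 + Real.log η)) (nu μ m) :=
        i1.const_mul _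
      rw [integral_add i2 (integrable_const _), integral_const_mul, integral_add (hk.div_const 10)
        (integrable_const _), integral_div]
      simp
    rw [e3]
    refine integral_mono ((((hk.div_const 10).add (integrable_const _)).const_mul _).add
      (integrable_const _)) (integrable_finsetSum _ fun n _ => (hi n).integral_prod_left) ?_
    intro h'
    obtain ⟨w, hw, hgood⟩ := sg_good h'
    have hbb := hb v w hv hw
    have each : ∀ n ∈ Finset.range N, (kappa h' + Real.log η) - 2 * kappa h' *
        (nu μ n).real {h | |inner ℝ w (LL h v)| ≤ η * ‖LL h v‖} + ∫ g, sg g v ∂(nu μ n) ≤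
        ∫ h, sg (h' * h) v ∂(nu μ n) := by
      intro n _
      set B := {h | |inner ℝ w (LL h v)| ≤ η * ‖LL h v‖} with hB
      have hBm : MeasurableSet B := inner_meas v w η
      have ii : Integrable (fun h => B.indicator (fun _ => (1:ℝ)) h) (nu μ n) :=
        (integrable_const 1).indicator hBm
      have i1 : Integrable (fun h => (kappa h' + Real.log η) - 2 * kappa h' *
        B.indicator (fun _ => (1:ℝ)) h) (nu μ n) := (integrable_const _).sub (ii.const_mul _)
      have i0 := sg_int μ hmom n hv
      have i3 : Integrable (fun h => sg (h' * h) v) (nu μ n) := by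
        refine Integrable.mono' ((integrable_const (kappa h')).add (kappa_int μ hmom n))
          ((sg_cont hv).comp (continuous_const_mul h')).aestronglyMeasurable
          (Eventually.of_forall fun h => ?_)
        exact (sg_abs _ hv).trans (kappa_mul _ _)
      have := integral_mono (i1.add i0) i3 (fun h => by
        simp only [Pi.add_apply, sg_mul]
        by_cases hh : h ∈ B
        · simp only [hh, Set.indicator_of_mem]
          have := (abs_le.1 (sg_abs h' (LL_ne h hv))).1
          linarith
        · simp only [hh, not_false_eq_true, Set.indicator_of_notMem]
          have := hgood (LL h v) (LL_ne h hv) η hη (not_le.1 hh)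
          linarith)
      simp only [Pi.add_apply] at this
      rw [integral_add i1 i0, integral_sub (integrable_const _) (ii.const_mul _),
        integral_const_mul, integral_indicator_const _ hBm] at this
      simpa using this
    have hs := Finset.sum_le_sum each
    rw [Finset.sum_add_distrib, Finset.sum_sub_distrib, ← Finset.mul_sum] at hs
    simp only [Finset.sum_const, Finset.card_range, nsmul_eq_mul] at hs
    refine le_trans ?_ hs
    have := mul_le_mul_of_nonneg_left hbb (kappa_nonneg h')
    nlinarith
  have h3 := Finset.sum_le_sum h1
  have h4 : ∑ n ∈ Finset.range N, (-K2) ≤ ∑ n ∈ Finset.range N, ∫ g, sg g v ∂(nu μ n) :=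
    Finset.sum_le_sum fun n hn => lowf n (Finset.mem_range.1 hn).le
  rw [Finset.sum_sub_distrib] at h3
  simp only [Finset.sum_const, Finset.card_range, nsmul_eq_mul] at h3 h4
  have hN' : (0:ℝ) < N := by exact_mod_cast hN
  have h5 : (N:ℝ) * 1 ≤ N * ∫ g, sg g v ∂(nu μ (m + N)) := by
    have : (N:ℝ) * (1 + 2 * K2) ≤ N * ((∫ g, kappa g ∂(nu μ m)) / 10 + Real.log η) :=
      mul_le_mul_of_nonneg_left (by linarith) hN'.le
    nlinarith
  exact le_of_mul_le_mul_left h5 hN'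

lemma stepE (μ : Measure SL2) [IsProbabilityMeasure μ] (hmom : HasExpMoment μ)
    (hD : ∃ N, ∀ v : EV, v ≠ 0 → 1 ≤ ∫ g, sg g v ∂(nu μ N)) :
    ∃ K : ℝ, 0 ≤ K ∧ ∀ v : EV, v ≠ 0 → ∑' n, nu μ n {h | sg h v ≤ 1} ≤ ENNReal.ofReal K := by
  obtain ⟨N, hN⟩ := hD
  obtain ⟨ε, hε0, hε⟩ := hmom
  have hmom : HasExpMoment μ := ⟨ε, hε0, hε⟩
  have hN0 : N ≠ 0 := by
    rintro rfl
    have hv : (EuclideanSpace.single 0 1 : EV) ≠ 0 := by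
      intro h; simpa using congrArg norm h
    have := hN _ hv
    have e : nu μ 0 = Measure.dirac 1 := rfl
    rw [e, integral_dirac] at this
    simp [sg, LL_one_apply] at this
    linarith
  set B : ℝ := (16 / ε ^ 2) * ∫ g, Real.exp (ε * kappa g) ∂(nu μ N) with hB
  have hB0 : 0 ≤ B := mul_nonneg (by positivity) (integral_nonneg fun _ => (Real.exp_pos _).le)
  obtain ⟨δ, hδ0, hδε, hδB⟩ : ∃ δ : ℝ, 0 < δ ∧ δ ≤ ε / 2 ∧ δ * B ≤ 1 / 2 := by
    refine ⟨min (ε / 2) (1 / (2 * (B + 1))), by positivity, min_le_left _ _, ?_⟩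
    calc _ ≤ (1 / (2 * (B + 1))) * B := mul_le_mul_of_nonneg_right (min_le_right _ _) hB0
      _ ≤ 1 / 2 := by
        rw [div_mul_eq_mul_div, div_le_div_iff₀ (by positivity) (by positivity)]; linarith
  obtain ⟨ρ, hρ0, hρ1, hρ⟩ : ∃ ρ : ℝ, 0 ≤ ρ ∧ ρ < 1 ∧ 1 - δ + δ * (δ * B) ≤ ρ := by
    refine ⟨max 0 (1 - δ + δ * (δ * B)), le_max_left _ _, max_lt one_pos ?_, le_max_right _ _⟩
    nlinarith
  have hdom : ∀ n, ∀ v : EV, v ≠ 0 → Integrable (fun g => Real.exp (-δ * sg g v)) (nu μ n) := by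
    intro n v hv
    refine (mom_int μ hε hε0 n).mono' ?_ (Eventually.of_forall fun g => ?_)
    · have := sg_cont hv
      exact (by fun_prop : Continuous (fun g => Real.exp (-δ * sg g v))).aestronglyMeasurable
    · rw [Real.norm_of_nonneg (Real.exp_pos _).le]
      refine Real.exp_le_exp.2 ?_
      have := abs_le.1 (sg_abs g hv)
      nlinarith [kappa_nonneg g]
  have hcontr : ∀ v : EV, v ≠ 0 → ∫ g, Real.exp (-δ * sg g v) ∂(nu μ N) ≤ ρ := by
    intro v hv
    have hs := sg_int μ hmom N hv
    have he := mom_int μ hε hε0 N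
    have := integral_mono (hdom N v hv) (((integrable_const 1).sub (hs.const_mul δ)).add
      (he.const_mul (δ ^ 2 * (16 / ε ^ 2)))) (fun g => by
        simp only [Pi.add_apply, Pi.sub_apply]
        have h1 := exp_quad (-δ * sg g v)
        have h2 := sg_abs g hv
        have hk := kappa_nonneg g
        have h3 : |-δ * sg g v| ≤ ε / 2 * kappa g := by
          rw [abs_mul, abs_neg, abs_of_pos hδ0]
          exact mul_le_mul hδε h2 (abs_nonneg _) (by positivity)
        have h4 : (-δ * sg g v) ^ 2 ≤ δ ^ 2 * kappa g ^ 2 := by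
          rw [mul_pow, neg_sq]
          refine mul_le_mul_of_nonneg_left ?_ (by positivity)
          rw [← sq_abs (sg g v)]
          exact pow_le_pow_left₀ (abs_nonneg _) h2 2
        have h5 : kappa g ^ 2 ≤ 16 / ε ^ 2 * Real.exp (ε / 2 * kappa g) := by
          have h6 := Real.add_one_le_exp (ε / 4 * kappa g)
          have h7 : Real.exp (ε / 2 * kappa g) = Real.exp (ε / 4 * kappa g) ^ 2 := by
            rw [← Real.exp_nat_mul]; congr 1; push_cast; ring
          rw [h7]
          have h8 : (ε / 4 * kappa g) ^ 2 ≤ Real.exp (ε / 4 * kappa g) ^ 2 :=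
            pow_le_pow_left₀ (by positivity) (by linarith) 2
          calc kappa g ^ 2 = 16 / ε ^ 2 * (ε / 4 * kappa g) ^ 2 := by field_simp; ring
            _ ≤ _ := mul_le_mul_of_nonneg_left h8 (by positivity)
        have h9 : (-δ * sg g v) ^ 2 * Real.exp |-δ * sg g v| ≤
            δ ^ 2 * (16 / ε ^ 2) * Real.exp (ε * kappa g) := by
          calc _ ≤ (δ ^ 2 * (16 / ε ^ 2 * Real.exp (ε / 2 * kappa g))) *
                Real.exp (ε / 2 * kappa g) :=
                mul_le_mul (h4.trans (mul_le_mul_of_nonneg_left h5 (by positivity)))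
                  (Real.exp_le_exp.2 h3) (Real.exp_pos _).le (by positivity)
            _ = δ ^ 2 * (16 / ε ^ 2) * (Real.exp (ε / 2 * kappa g) * Real.exp (ε / 2 * kappa g)) := by
                ring
            _ = _ := by rw [← Real.exp_add]; congr 2; ring
        linarith)
    simp only [Pi.add_apply, Pi.sub_apply] at this
    have i1 : Integrable (fun g => 1 - δ * sg g v) (nu μ N) :=
      (integrable_const 1).sub (hs.const_mul δ)
    rw [integral_add i1 (he.const_mul _),
      integral_sub (integrable_const 1) (hs.const_mul δ), integral_const_mul, integral_const_mul] at this
    simp only [integral_const, probReal_univ, smul_eq_mul, mul_one] at this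
    have h1 := hN v hv
    have : ∫ g, Real.exp (-δ * sg g v) ∂(nu μ N) ≤ 1 - δ * ∫ g, sg g v ∂(nu μ N) + δ * (δ * B) := by
      refine this.trans (le_of_eq ?_); rw [hB]; ring
    nlinarith
  -- ENNReal version
  have hmeas : ∀ v : EV, v ≠ 0 → Measurable (fun g => ENNReal.ofReal (Real.exp (-δ * sg g v))) := by
    intro v hv
    have := (sg_cont hv).measurable
    fun_prop
  have hcontr' : ∀ v : EV, v ≠ 0 →
      ∫⁻ g, ENNReal.ofReal (Real.exp (-δ * sg g v)) ∂(nu μ N) ≤ ENNReal.ofReal ρ := by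
    intro v hv
    rw [← ofReal_integral_eq_lintegral_ofReal (hdom N v hv)
      (Eventually.of_forall fun g => (Real.exp_pos _).le)]
    exact ENNReal.ofReal_le_ofReal (hcontr v hv)
  set A : ℝ := ∑ r ∈ Finset.range N, ∫ g, Real.exp (ε * kappa g) ∂(nu μ r) with hA
  have hA0 : 0 ≤ A := Finset.sum_nonneg fun _ _ => integral_nonneg fun _ => (Real.exp_pos _).le
  have hstep : ∀ k r : ℕ, r < N → ∀ v : EV, v ≠ 0 →
      ∫⁻ g, ENNReal.ofReal (Real.exp (-δ * sg g v)) ∂(nu μ (r + N * k)) ≤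
      ENNReal.ofReal (ρ ^ k * A) := by
    intro k r hr
    induction k with
    | zero =>
      intro v hv
      rw [mul_zero, add_zero, pow_zero, one_mul, ← ofReal_integral_eq_lintegral_ofReal (hdom r v hv)
        (Eventually.of_forall fun g => (Real.exp_pos _).le)]
      refine ENNReal.ofReal_le_ofReal ?_
      have h1 : ∫ g, Real.exp (-δ * sg g v) ∂(nu μ r) ≤ ∫ g, Real.exp (ε * kappa g) ∂(nu μ r) := by
        refine integral_mono (hdom r v hv) (mom_int μ hε hε0 r) fun g => Real.exp_le_exp.2 ?_
        have := abs_le.1 (sg_abs g hv)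
        nlinarith [kappa_nonneg g]
      exact h1.trans (Finset.single_le_sum (f := fun r => ∫ g, Real.exp (ε * kappa g) ∂(nu μ r))
        (fun _ _ => integral_nonneg fun _ => (Real.exp_pos _).le) (Finset.mem_range.2 hr))
    | succ k ih =>
      intro v hv
      have e : r + N * (k + 1) = (r + N * k) + N := by ring
      rw [e, lint_nu_add μ _ N (hmeas v hv)]
      calc _ = ∫⁻ h, (∫⁻ h', ENNReal.ofReal (Real.exp (-δ * sg h' (LL h v))) ∂(nu μ (r + N * k))) *
            ENNReal.ofReal (Real.exp (-δ * sg h v)) ∂(nu μ N) := by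
            refine lintegral_congr fun h => ?_
            rw [← lintegral_mul_const _ (hmeas _ (LL_ne h hv))]
            refine lintegral_congr fun h' => ?_
            rw [← ENNReal.ofReal_mul (Real.exp_pos _).le, ← Real.exp_add, sg_mul, mul_add]
        _ ≤ ∫⁻ h, ENNReal.ofReal (ρ ^ k * A) * ENNReal.ofReal (Real.exp (-δ * sg h v)) ∂(nu μ N) :=
            lintegral_mono fun h => mul_le_mul_left (ih (LL h v) (LL_ne h hv)) _
        _ = ENNReal.ofReal (ρ ^ k * A) * ∫⁻ h, ENNReal.ofReal (Real.exp (-δ * sg h v)) ∂(nu μ N) :=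
            lintegral_const_mul _ (hmeas v hv)
        _ ≤ ENNReal.ofReal (ρ ^ k * A) * ENNReal.ofReal ρ := mul_le_mul_right (hcontr' v hv) _
        _ = _ := by rw [← ENNReal.ofReal_mul (by positivity)]; congr 1; ring
  refine ⟨N * (Real.exp δ * A * (1 - ρ)⁻¹), ?_, fun v hv => ?_⟩
  · have : 0 < 1 - ρ := by linarith
    positivity
  have hcheb : ∀ n, nu μ n {h | sg h v ≤ 1} ≤ ENNReal.ofReal (Real.exp δ) *
      ∫⁻ g, ENNReal.ofReal (Real.exp (-δ * sg g v)) ∂(nu μ n) := by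
    intro n
    have hm : MeasurableSet {h | sg h v ≤ 1} := (isClosed_le (sg_cont hv) continuous_const).measurableSet
    rw [← lintegral_const_mul _ (hmeas v hv), ← lintegral_indicator_one hm]
    refine lintegral_mono fun g => ?_
    by_cases hg : g ∈ {h | sg h v ≤ 1}
    · rw [Set.indicator_of_mem hg, ← ENNReal.ofReal_mul (Real.exp_pos _).le, ← Real.exp_add]
      refine ENNReal.one_le_ofReal.2 (Real.one_le_exp ?_)
      have : sg g v ≤ 1 := hg
      nlinarith
    · rw [Set.indicator_of_notMem hg]; exact zero_le
  have hgeo : HasSum (fun k : ℕ => Real.exp δ * (ρ ^ k * A)) (Real.exp δ * ((1 - ρ)⁻¹ * A)) :=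
    ((hasSum_geometric_of_lt_one hρ0 hρ1).mul_right A).mul_left _
  have : NeZero N := ⟨hN0⟩
  calc ∑' n, nu μ n {h | sg h v ≤ 1}
      = ∑' p : ℕ × Fin N, nu μ (p.2 + N * p.1) {h | sg h v ≤ 1} := by
        rw [← (Nat.divModEquiv N).symm.tsum_eq]
        refine tsum_congr fun p => ?_
        simp [Nat.divModEquiv, add_comm, mul_comm]
    _ ≤ ∑' p : ℕ × Fin N, ENNReal.ofReal (Real.exp δ * (ρ ^ p.1 * A)) := by
        refine ENNReal.tsum_le_tsum fun p => (hcheb _).trans ?_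
        rw [ENNReal.ofReal_mul (Real.exp_pos _).le]
        exact mul_le_mul_right (hstep p.1 p.2 p.2.2 v hv) _
    _ = ∑' k : ℕ, ∑' r : Fin N, ENNReal.ofReal (Real.exp δ * (ρ ^ k * A)) :=
        ENNReal.tsum_prod (f := fun k (_ : Fin N) => ENNReal.ofReal (Real.exp δ * (ρ ^ k * A)))
    _ = N * ∑' k : ℕ, ENNReal.ofReal (Real.exp δ * (ρ ^ k * A)) := by
        rw [← ENNReal.tsum_mul_left]
        refine tsum_congr fun k => ?_
        rw [tsum_fintype]; simp
    _ = N * ENNReal.ofReal (Real.exp δ * ((1 - ρ)⁻¹ * A)) := by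
        rw [← ENNReal.ofReal_tsum_of_nonneg (fun k => by positivity) hgeo.summable, hgeo.tsum_eq]
    _ = ENNReal.ofReal (N * (Real.exp δ * A * (1 - ρ)⁻¹)) := by
        rw [ENNReal.ofReal_mul (Nat.cast_nonneg N), ENNReal.ofReal_natCast]
        congr 2; ring
    _ ≤ _ := le_rfl


end

section

open scoped ENNReal

lemma SL2_mul_apply (a b : SL2) (i j : Fin 2) : (a * b) i j = a i 0 * b 0 j + a i 1 * b 1 j := by
  simp [Matrix.mul_apply, Fin.sum_univ_two]

lemma SL2_ext' {a b : SL2} (h00 : a 0 0 = b 0 0) (h01 : a 0 1 = b 0 1) (h10 : a 1 0 = b 1 0)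
    (h11 : a 1 1 = b 1 1) : a = b := by
  ext i j
  fin_cases i <;> fin_cases j <;> assumption

lemma SL2_inv00 (a : SL2) : a⁻¹ 0 0 = a 1 1 := by simp [Matrix.SpecialLinearGroup.SL2_inv_expl]
lemma SL2_inv01 (a : SL2) : a⁻¹ 0 1 = - a 0 1 := by simp [Matrix.SpecialLinearGroup.SL2_inv_expl]
lemma SL2_inv10 (a : SL2) : a⁻¹ 1 0 = - a 1 0 := by simp [Matrix.SpecialLinearGroup.SL2_inv_expl]
lemma SL2_inv11 (a : SL2) : a⁻¹ 1 1 = a 0 0 := by simp [Matrix.SpecialLinearGroup.SL2_inv_expl]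

lemma entry_le (a : SL2) (i j : Fin 2) : |a i j| ≤ Real.exp (kappa a) := by
  rw [exp_kappa]
  have h1 := (LL a).le_opNorm (EuclideanSpace.single j (1:ℝ))
  have h2 := PiLp.norm_apply_le (LL a (EuclideanSpace.single j (1:ℝ))) i
  have h3 : (LL a (EuclideanSpace.single j (1:ℝ))) i = a i j := by
    fin_cases i <;> fin_cases j <;> simp [LL_apply0, LL_apply1]
  rw [h3] at h2
  simp at h1
  exact h2.trans h1

lemma bdd_doubling {x B : ℝ} (h : ∀ n : ℕ, 2 ^ n * x ≤ B) : x ≤ 0 := by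
  by_contra hx
  push Not at hx
  obtain ⟨n, hn⟩ := pow_unbounded_of_one_lt (B / x) (one_lt_two)
  rw [div_lt_iff₀ hx] at hn
  linarith [h n]

lemma bdd_tr (Γ : Subgroup SL2) (R : ℝ) (hR : ∀ g ∈ Γ, kappa g ≤ R) {a : SL2} (ha : a ∈ Γ) :
    |a 0 0 + a 1 1| ≤ 2 := by
  have key : ∀ n : ℕ, ∀ a ∈ Γ, 2 ≤ |a 0 0 + a 1 1| →
      2 ^ n * (|a 0 0 + a 1 1| - 2) ≤ 2 * Real.exp R := by
    intro n
    induction n with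
    | zero =>
      intro a ha _
      have h1 := entry_le a 0 0
      have h2 := entry_le a 1 1
      have h3 := Real.exp_le_exp.2 (hR a ha)
      have := abs_add_le (a 0 0) (a 1 1)
      linarith
    | succ n ih =>
      intro a ha h2a
      have e : (a * a) 0 0 + (a * a) 1 1 = |a 0 0 + a 1 1| ^ 2 - 2 := by
        rw [sq_abs]; simp only [SL2_mul_apply]; linear_combination (-2) * SL2_det a
      have h1 := ih (a * a) (mul_mem ha ha) (by
        rw [e]; refine le_trans ?_ (le_abs_self _); nlinarith)
      rw [e] at h1
      have h2 := le_abs_self (|a 0 0 + a 1 1| ^ 2 - 2)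
      rw [pow_succ, mul_assoc]
      refine le_trans (mul_le_mul_of_nonneg_left ?_ (by positivity)) h1
      nlinarith
  by_contra hcon
  push Not at hcon
  linarith [bdd_doubling (fun n => key n a ha hcon.le)]

lemma bdd_tr2 (Γ : Subgroup SL2) (R : ℝ) (hR : ∀ g ∈ Γ, kappa g ≤ R) {a : SL2} (ha : a ∈ Γ)
    (ht : a 0 0 + a 1 1 = 2) : a = 1 := by
  have key : ∀ n : ℕ, ∀ a ∈ Γ, a 0 0 + a 1 1 = 2 → ∀ i j : Fin 2,
      2 ^ n * |a i j - (1 : SL2) i j| ≤ Real.exp R + 1 := by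
    intro n
    induction n with
    | zero =>
      intro a ha _ i j
      have h1 := entry_le a i j
      have h3 := Real.exp_le_exp.2 (hR a ha)
      have := abs_sub (a i j) ((1 : SL2) i j)
      have h4 : |(1 : SL2) i j| ≤ 1 := by fin_cases i <;> fin_cases j <;> simp
      linarith
    | succ n ih =>
      intro a ha ht i j
      have e : (a * a) 0 0 + (a * a) 1 1 = 2 := by
        simp only [SL2_mul_apply]
        linear_combination (-2) * SL2_det a + (a 0 0 + a 1 1 + 2) * ht
      have h1 := ih (a * a) (mul_mem ha ha) e i j
      have e2 : (a * a) i j - (1 : SL2) i j = 2 * (a i j - (1 : SL2) i j) := by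
        have hd := SL2_det a
        fin_cases i <;> fin_cases j <;> simp [SL2_mul_apply]
        · linear_combination a 0 0 * ht - hd
        · linear_combination a 0 1 * ht
        · linear_combination a 1 0 * ht
        · linear_combination a 1 1 * ht - hd
      rw [e2, abs_mul, abs_two] at h1
      rw [pow_succ]; linarith
  have h0 : ∀ i j, a i j = (1 : SL2) i j := fun i j => by
    have := bdd_doubling (fun n => key n a ha ht i j)
    exact sub_eq_zero.1 (abs_nonpos_iff.1 this)
  exact SL2_ext' (h0 _ _) (h0 _ _) (h0 _ _) (h0 _ _)

lemma disc_aux {d p q r x y : ℝ} (hrel : d * p + q * y + r * x = 0)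
    (hdisc : d ^ 2 + 4 * (x * y) < 0) (hA : x * y < 0) (h : p ^ 2 + q * r ≤ 0) :
    p = 0 ∧ q = 0 ∧ r = 0 := by
  have hF : -(4 * (x * y)) * (p ^ 2 + q * r) =
      -(d ^ 2 + 4 * (x * y)) * p ^ 2 + (q * y - r * x) ^ 2 := by
    linear_combination (d * p - q * y - r * x) * hrel
  have hF0 : -(4 * (x * y)) * (p ^ 2 + q * r) ≤ 0 :=
    mul_nonpos_of_nonneg_of_nonpos (by linarith) h
  have hG : 0 ≤ -(d ^ 2 + 4 * (x * y)) * p ^ 2 := mul_nonneg (by linarith) (sq_nonneg p)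
  have hG0 : -(d ^ 2 + 4 * (x * y)) * p ^ 2 = 0 := by linarith [sq_nonneg (q * y - r * x)]
  have hs0 : (q * y - r * x) ^ 2 = 0 :=
    le_antisymm (by linarith) (sq_nonneg _)
  have hp1 : p = 0 := by
    rcases mul_eq_zero.1 hG0 with h | h
    · linarith
    · simpa using h
  have hs1 : q * y - r * x = 0 := by simpa using hs0
  rw [hp1] at hrel
  have hn1 : x ≠ 0 := by rintro rfl; simp at hA
  have hn2 : y ≠ 0 := by rintro rfl; simp at hA
  refine ⟨hp1, ?_, ?_⟩
  · have : q * y = 0 := by linarith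
    simpa [hn2] using this
  · have : r * x = 0 := by linarith
    simpa [hn1] using this

lemma bdd_comm (Γ : Subgroup SL2) (R : ℝ) (hR : ∀ g ∈ Γ, kappa g ≤ R) {a b : SL2} (ha : a ∈ Γ)
    (hb : b ∈ Γ) : a * b = b * a := by
  have hta := abs_le.1 (bdd_tr Γ R hR ha)
  have hda := SL2_det a
  have hdb := SL2_det b
  rcases eq_or_ne (a 0 0 + a 1 1) 2 with h2 | h2
  · rw [bdd_tr2 Γ R hR ha h2]; simp
  rcases eq_or_ne (a 0 0 + a 1 1) (-2) with h3 | h3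
  · have e : (a * a) 0 0 + (a * a) 1 1 = 2 := by
      simp only [SL2_mul_apply]
      linear_combination (-2) * SL2_det a + (a 0 0 + a 1 1 - 2) * h3
    have h4 := bdd_tr2 Γ R hR (mul_mem ha ha) e
    have f : ∀ i j, (a * a) i j = (1 : SL2) i j := fun i j => by rw [h4]
    have f00 := f 0 0
    have f01 := f 0 1
    have f10 := f 1 0
    have f11 := f 1 1
    simp only [SL2_mul_apply] at f00 f01 f10 f11
    simp at f00 f01 f10 f11
    have g01 : a 0 1 = 0 := by linear_combination (1/2) * a 0 1 * h3 - (1/2) * f01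
    have g10 : a 1 0 = 0 := by linear_combination (1/2) * a 1 0 * h3 - (1/2) * f10
    have g00 : a 0 0 = a 1 1 := by
      have : a 0 0 = -1 := by linear_combination (1/2) * a 0 0 * h3 - (1/2) * f00 - (1/2) * hda
      linarith
    apply SL2_ext' <;> simp only [SL2_mul_apply, g01, g10, g00] <;> ring
  · set d := a 0 0 - a 1 1 with hd
    set p := a 0 1 * b 1 0 - b 0 1 * a 1 0 with hp
    set q := d * b 0 1 - a 0 1 * (b 0 0 - b 1 1) with hq
    set r := a 1 0 * (b 0 0 - b 1 1) - d * b 1 0 with hr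
    have hrel : d * p + q * a 1 0 + r * a 0 1 = 0 := by rw [hp, hq, hr]; ring
    have hdisc : d ^ 2 + 4 * (a 0 1 * a 1 0) < 0 := by
      have e : d ^ 2 + 4 * (a 0 1 * a 1 0) = (a 0 0 + a 1 1 - 2) * (a 0 0 + a 1 1 + 2) := by
        rw [hd]; linear_combination (-4) * hda
      rw [e]
      have h4 : a 0 0 + a 1 1 < 2 := lt_of_le_of_ne hta.2 h2
      have h5 : -2 < a 0 0 + a 1 1 := lt_of_le_of_ne hta.1 (Ne.symm h3)
      nlinarith
    have hA : a 0 1 * a 1 0 < 0 := by nlinarith [sq_nonneg d]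
    have htr := (abs_le.1 (bdd_tr Γ R hR
      (mul_mem (mul_mem (mul_mem ha hb) (inv_mem ha)) (inv_mem hb)))).2
    have etr : (a * b * a⁻¹ * b⁻¹) 0 0 + (a * b * a⁻¹ * b⁻¹) 1 1 = 2 + (p ^ 2 + q * r) := by
      simp only [SL2_mul_apply, SL2_inv00, SL2_inv01, SL2_inv10, SL2_inv11]
      rw [hp, hq, hr, hd]
      linear_combination (2 * (b 0 0 * b 1 1 - b 0 1 * b 1 0)) * hda + 2 * hdb
    rw [etr] at htr
    obtain ⟨hp1, hq0, hr0⟩ := disc_aux hrel hdisc hA (by linarith)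
    apply SL2_ext' <;> simp only [SL2_mul_apply]
    · linear_combination hp.symm.trans hp1
    · linear_combination hq.symm.trans hq0 - b 0 1 * hd
    · linear_combination hr.symm.trans hr0 + b 1 0 * hd
    · linear_combination -(hp.symm.trans hp1)

lemma bdd_solvable (Γ : Subgroup SL2) (R : ℝ) (hR : ∀ g ∈ Γ, kappa g ≤ R) : IsSolvable Γ :=
  isSolvable_of_comm fun a b => Subtype.ext (bdd_comm Γ R hR a.2 b.2)

lemma supp_sub (μ : Measure SL2) {A : Set SL2} (hA : IsClosed A) (h : ∀ᵐ g ∂μ, g ∈ A) :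
    measSupp μ ⊆ A := by
  intro g hg
  by_contra hn
  have := hg Aᶜ hA.isOpen_compl hn
  exact this.ne' h


end

section

open scoped ENNReal

/-- A closed set of left translations preserving a compact set yields a bounded group. -/
lemma stab_solvable (M : Set SL2) (hM : IsClosed M) (hne : M.Nonempty) (R : ℝ)
    (hR : ∀ x ∈ M, kappa x ≤ R) (S0 : Set SL2) (hS0 : ∀ g ∈ S0, ∀ x ∈ M, g * x ∈ M) :
    IsSolvable (Subgroup.closure S0) := by
  set S : Set SL2 := {g | ∀ x ∈ M, g * x ∈ M} with hS
  obtain ⟨x0, hx0⟩ := hne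
  have hSb : ∀ g ∈ S, kappa g ≤ 2 * R := by
    intro g hg
    have h1 := hR _ (hg x0 hx0)
    have h2 := hR _ hx0
    have h3 := kappa_mul (g * x0) x0⁻¹
    rw [kappa_inv, mul_inv_cancel_right] at h3
    linarith
  have hSc : IsClosed S := by
    have : S = ⋂ x ∈ M, (fun g => g * x) ⁻¹' M := by ext g; simp [hS]
    rw [this]
    exact isClosed_biInter fun x _ => hM.preimage (continuous_mul_const x)
  have hScomp : IsCompact S := (compact_kappa (2 * R)).of_isClosed_subset hSc hSb
  have hSmul : ∀ a ∈ S, ∀ b ∈ S, a * b ∈ S := by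
    intro a ha b hb x hx
    rw [mul_assoc]; exact ha _ (hb x hx)
  have hSone : (1 : SL2) ∈ S := fun x hx => by simpa using hx
  have hSinv : ∀ s ∈ S, s⁻¹ ∈ S := by
    intro s hs
    obtain ⟨m, ⟨k, hk, hkm⟩, hm⟩ := exists_idempotent_in_compact_subsemigroup
      (fun r : SL2 => continuous_mul_const r) ((fun k => s * k) '' S)
      ⟨_, 1, hSone, rfl⟩ (hScomp.image (continuous_const_mul s)) (by
        rintro _ ⟨a, ha, rfl⟩ _ ⟨b, hb, rfl⟩
        exact ⟨a * (s * b), hSmul _ ha _ (hSmul _ hs _ hb), by simp [mul_assoc]⟩)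
    have h1 : m = 1 := by simpa using hm
    have h2 : s * k = 1 := hkm.trans h1
    rw [inv_eq_of_mul_eq_one_right h2]; exact hk
  let G : Subgroup SL2 :=
    { carrier := S, mul_mem' := fun ha hb => hSmul _ ha _ hb, one_mem' := hSone,
      inv_mem' := fun ha => hSinv _ ha }
  have hG : Subgroup.closure S0 ≤ G := (Subgroup.closure_le G).2 fun g hg => hS0 g hg
  exact bdd_solvable _ (2 * R) fun g hg => hSb g (hG hg)

lemma stepC (μ : Measure SL2) [IsProbabilityMeasure μ] (hmom : HasExpMoment μ)
    (hzd : ZariskiDense μ) : ∀ R : ℝ, ∃ m, R ≤ ∫ g, kappa g ∂(nu μ m) := by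
  by_contra hcon
  push Not at hcon
  obtain ⟨R, hR⟩ := hcon
  have hR0 : 0 ≤ R := (integral_nonneg kappa_nonneg).trans (hR 0).le
  have hkm : ∀ g : SL2, Measurable (fun h : SL2 => ENNReal.ofReal (kappa (h * g))) := by
    intro g
    have : Continuous fun h : SL2 => kappa (h * g) := kappa_cont.comp (continuous_mul_const g)
    exact this.measurable.ennreal_ofReal
  have hRl : ∀ n, ∫⁻ h, ENNReal.ofReal (kappa h) ∂(nu μ n) ≤ ENNReal.ofReal R := by
    intro n
    rw [← ofReal_integral_eq_lintegral_ofReal (kappa_int μ hmom n)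
      (Eventually.of_forall kappa_nonneg)]
    exact ENNReal.ofReal_le_ofReal (hR n).le
  set J : ℕ → SL2 → ℝ≥0∞ := fun n g => ∫⁻ h, ENNReal.ofReal (kappa (h * g)) ∂(nu μ n) with hJ
  set Φ : SL2 → ℝ≥0∞ := fun g => liminf (fun n => J n g) atTop with hΦ
  have ha : ∀ g g', Φ g ≤ Φ g' + ENNReal.ofReal (kappa (g'⁻¹ * g)) := by
    intro g g'
    rw [hΦ]; dsimp only
    rw [← liminf_add_const atTop (fun n => J n g') _ (by isBoundedDefault) (by isBoundedDefault)]
    refine liminf_le_liminf (Eventually.of_forall fun n => ?_)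
    have : ∫⁻ h, (ENNReal.ofReal (kappa (h * g')) + ENNReal.ofReal (kappa (g'⁻¹ * g))) ∂(nu μ n)
        = J n g' + ENNReal.ofReal (kappa (g'⁻¹ * g)) := by
      rw [lintegral_add_left (hkm g')]; simp [hJ]
    rw [← this]
    refine lintegral_mono fun h => ?_
    rw [← ENNReal.ofReal_add (kappa_nonneg _) (kappa_nonneg _)]
    refine ENNReal.ofReal_le_ofReal ?_
    have := kappa_mul (h * g') (g'⁻¹ * g)
    rwa [mul_assoc, mul_inv_cancel_left] at this
  have hΦ1 : Φ 1 ≤ ENNReal.ofReal R := by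
    refine (liminf_le_liminf (v := fun _ => ENNReal.ofReal R)
      (Eventually.of_forall fun n => ?_)).trans (by simp)
    simpa [hJ] using hRl n
  have hfin : ∀ g, Φ g ≠ ⊤ := fun g =>
    ((ha g 1).trans_lt (ENNReal.add_lt_top.2 ⟨hΦ1.trans_lt ENNReal.ofReal_lt_top,
      ENNReal.ofReal_lt_top⟩)).ne
  have hb : ∀ g, ENNReal.ofReal (kappa g) ≤ Φ g + ENNReal.ofReal R := by
    intro g
    rw [hΦ]; dsimp only
    rw [← liminf_add_const atTop (fun n => J n g) _ (by isBoundedDefault) (by isBoundedDefault)]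
    refine le_liminf_of_le (by isBoundedDefault) (Eventually.of_forall fun n => ?_)
    have : ∫⁻ h, (ENNReal.ofReal (kappa (h * g)) + ENNReal.ofReal (kappa h)) ∂(nu μ n)
        ≤ J n g + ENNReal.ofReal R := by
      rw [lintegral_add_left (hkm g)]
      exact add_le_add le_rfl (hRl n)
    refine le_trans ?_ this
    calc ENNReal.ofReal (kappa g) = ∫⁻ h, ENNReal.ofReal (kappa g) ∂(nu μ n) := by simp
      _ ≤ _ := by
        refine lintegral_mono fun h => ?_
        rw [← ENNReal.ofReal_add (kappa_nonneg _) (kappa_nonneg _)]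
        refine ENNReal.ofReal_le_ofReal ?_
        have := kappa_mul h⁻¹ (h * g)
        rw [inv_mul_cancel_left, kappa_inv] at this
        linarith
  have hJm : ∀ n g, Measurable (fun h => J n (h * g)) := by
    intro n g
    have hc : Continuous fun p : SL2 × SL2 => kappa (p.2 * (p.1 * g)) :=
      kappa_cont.comp (continuous_snd.mul (continuous_fst.mul continuous_const))
    exact (hc.measurable.ennreal_ofReal).lintegral_prod_right'
  have hc : ∀ g, ∫⁻ h, Φ (h * g) ∂μ ≤ Φ g := by
    intro g
    have h1 := lintegral_liminf_le (μ := μ) (u := atTop) (f := fun n h => J n (h * g))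
      (fun n => hJm n g)
    have h2 : ∀ n, ∫⁻ h, J n (h * g) ∂μ = J (n + 1) g := by
      intro n
      rw [hJ]; dsimp only
      rw [lint_nu_add μ n 1 (hkm g), nu_one]
      simp only [mul_assoc]
    simp_rw [h2] at h1
    rwa [liminf_nat_add (fun n => J n g) 1] at h1
  clear_value Φ J
  set φ : SL2 → ℝ := fun g => (Φ g).toReal with hφ
  have hφΦ : ∀ g, ENNReal.ofReal (φ g) = Φ g := fun g => ENNReal.ofReal_toReal (hfin g)
  have hφ0 : ∀ g, 0 ≤ φ g := fun g => ENNReal.toReal_nonneg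
  have ha' : ∀ g g', φ g ≤ φ g' + kappa (g'⁻¹ * g) := by
    intro g g'
    have := ha g g'
    rw [← hφΦ g, ← hφΦ g', ← ENNReal.ofReal_add (hφ0 _) (kappa_nonneg _)] at this
    exact (ENNReal.ofReal_le_ofReal_iff (add_nonneg (hφ0 _) (kappa_nonneg _))).1 this
  have hb' : ∀ g, kappa g ≤ φ g + R := by
    intro g
    have := hb g
    rw [← hφΦ g, ← ENNReal.ofReal_add (hφ0 _) hR0] at this
    exact (ENNReal.ofReal_le_ofReal_iff (add_nonneg (hφ0 _) hR0)).1 this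
  have hφc : Continuous φ := by
    rw [continuous_iff_continuousAt]
    intro g'
    have hk : Tendsto (fun g => kappa (g'⁻¹ * g)) (nhds g') (nhds 0) := by
      have := (kappa_cont.comp (continuous_const_mul g'⁻¹)).tendsto g'
      simpa [kappa_one, Function.comp_def] using this
    refine tendsto_iff_dist_tendsto_zero.2 (squeeze_zero (fun _ => dist_nonneg) (fun g => ?_) hk)
    rw [Real.dist_eq, abs_le]
    have h1 := ha' g g'
    have h2 := ha' g' g
    have h3 : kappa (g⁻¹ * g') = kappa (g'⁻¹ * g) := by
      rw [← kappa_inv]; congr 1; group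
    constructor <;> linarith
  obtain ⟨x0, hx0, hmin0⟩ := (compact_kappa (φ 1 + R)).exists_isMinOn
    ⟨1, hb' 1⟩ hφc.continuousOn
  have hmin : ∀ g, φ x0 ≤ φ g := by
    intro g
    by_cases hg : kappa g ≤ φ 1 + R
    · exact hmin0 hg
    · have h1 : φ x0 ≤ φ 1 := hmin0 (hb' 1)
      have := hb' g
      linarith
  set M : Set SL2 := {g | φ g = φ x0} with hM
  have hMc : IsClosed M := isClosed_eq hφc continuous_const
  have hΦm : Measurable Φ := by
    have : Φ = fun g => ENNReal.ofReal (φ g) := funext fun g => (hφΦ g).symm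
    rw [this]; exact hφc.measurable.ennreal_ofReal
  refine hzd (stab_solvable M hMc ⟨x0, rfl⟩ (φ x0 + R) (fun x hx => ?_) _ ?_)
  · have := hb' x
    have h2 : φ x = φ x0 := hx
    linarith
  · intro g hg x hx
    have hx' : φ x = φ x0 := hx
    have hae : (fun _ : SL2 => Φ x0) =ᵐ[μ] fun h => Φ (h * x) := by
      refine ae_eq_of_ae_le_of_lintegral_le (Eventually.of_forall fun h => ?_) (by simp [hfin])
        (hΦm.comp (measurable_mul_const x)).aemeasurable ?_
      · show Φ x0 ≤ Φ (h * x)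
        rw [← hφΦ x0, ← hφΦ (h * x)]; exact ENNReal.ofReal_le_ofReal (hmin _)
      · refine (hc x).trans ?_
        rw [← hφΦ x, hx', hφΦ x0]; simp
    refine supp_sub μ (hMc.preimage (continuous_mul_const x)) ?_ hg
    filter_upwards [hae] with h hh
    have hh' : Φ x0 = Φ (h * x) := hh
    show φ (h * x) = φ x0
    rw [hφ]; dsimp only
    rw [hh']


end

section

open scoped ENNReal

lemma solv_of_comm_le (Γ H : Subgroup SL2) (h : ∀ a ∈ Γ, ∀ b ∈ Γ, a * b * a⁻¹ * b⁻¹ ∈ H)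
    (hH : IsSolvable H) : IsSolvable Γ := by
  have h1 : Group.IsSolvable (H.subgroupOf Γ) := by
    have : Group.IsSolvable H := hH
    let f : H.subgroupOf Γ →* H := 
      { toFun := fun x => ⟨x.1.1, x.2⟩, map_one' := rfl, map_mul' := fun _ _ => rfl }
    refine Group.isSolvable_of_isSolvable_injective (f := f) ?_
    intro x y hxy
    have : (f x).1 = (f y).1 := by rw [hxy]
    exact Subtype.ext (Subtype.ext this)
  have h2 : Group.IsSolvable (Abelianization Γ) := Group.isSolvable_of_comm mul_comm
  refine Group.isSolvable_of_ker_le_range (H.subgroupOf Γ).subtype (Abelianization.of (G := Γ)) ?_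
  rw [Abelianization.ker_of, Subgroup.range_subtype, commutator_def, Subgroup.commutator_le]
  intro a _ b _
  exact h a a.2 b b.2

abbrev XX := Projectivization ℝ EV

def av (g : SL2) (x : XX) : XX := Projectivization.mk ℝ (LL g x.rep) (LL_ne g x.rep_nonzero)

lemma av_mk (g : SL2) (v : EV) (hv : v ≠ 0) :
    av g (Projectivization.mk ℝ v hv) = Projectivization.mk ℝ (LL g v) (LL_ne g hv) := by
  unfold av
  rw [Projectivization.mk_eq_mk_iff']
  obtain ⟨a, ha⟩ := Projectivization.exists_smul_eq_mk_rep ℝ v hv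
  refine ⟨a, ?_⟩
  rw [← ha, Units.smul_def, map_smul]

lemma av_mul (g h : SL2) (x : XX) : av (g * h) x = av g (av h x) := by
  conv_rhs => rw [av.eq_1 h, av_mk]
  simp only [av, LL_mul_apply]

lemma av_one (x : XX) : av 1 x = x := by
  simp only [av, LL_one_apply]; exact x.mk_rep

lemma av_inj (g : SL2) : Function.Injective (av g) := by
  intro x y h
  have := congrArg (av g⁻¹) h
  simpa [← av_mul, av_one] using this

lemma EV_ext {u v : EV} (h0 : u 0 = v 0) (h1 : u 1 = v 1) : u = v := by
  ext i; fin_cases i <;> assumption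

lemma EV_inner (u v : EV) : inner ℝ u v = u 0 * v 0 + u 1 * v 1 := by
  simp [PiLp.inner_apply, Fin.sum_univ_two]; ring

lemma EV_ne {u : EV} (hu : u ≠ 0) : 0 < u 0 ^ 2 + u 1 ^ 2 := by
  rw [← EV_norm_sq]; have := norm_pos_iff.2 hu; positivity

lemma par_iff (u v : EV) (hu : u ≠ 0) (hv : v ≠ 0) :
    inner ℝ (JJ u) v = 0 ↔ Projectivization.mk ℝ v hv = Projectivization.mk ℝ u hu := by
  rw [Projectivization.mk_eq_mk_iff', EV_inner]
  have := EV_ne hu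
  constructor
  · intro h
    simp only [JJ] at h
    simp at h
    refine ⟨(u 0 * v 0 + u 1 * v 1) / (u 0 ^ 2 + u 1 ^ 2), EV_ext ?_ ?_⟩
    · simp; field_simp; linear_combination u 1 * h
    · simp; field_simp; linear_combination -u 0 * h
  · rintro ⟨a, rfl⟩
    simp [JJ]; ring

lemma perp_eq (w u v : EV) (hw : w ≠ 0) (hu : u ≠ 0) (hv : v ≠ 0) (h1 : inner ℝ w u = 0)
    (h2 : inner ℝ w v = 0) : Projectivization.mk ℝ u hu = Projectivization.mk ℝ v hv := by
  rw [← par_iff v u hv hu]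
  rw [EV_inner] at *
  have := EV_ne hw
  simp only [JJ]; simp
  have : (w 0 ^ 2 + w 1 ^ 2) * (-(v 1 * u 0) + v 0 * u 1) = 0 := by
    linear_combination (-w 0 * v 1 + w 1 * v 0) * h1 + (w 0 * u 1 - w 1 * u 0) * h2
  rcases mul_eq_zero.1 this with h | h
  · linarith
  · exact h

lemma fix_form (g : SL2) (v : EV) (hv : v ≠ 0) (h : LL g v = v) : ∃ c : ℝ,
    g 0 0 = 1 - c * (v 0 * v 1) ∧ g 0 1 = c * v 0 ^ 2 ∧ g 1 0 = - c * v 1 ^ 2 ∧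
    g 1 1 = 1 + c * (v 0 * v 1) := by
  have hd := SL2_det g
  have e0 : g 0 0 * v 0 + g 0 1 * v 1 = v 0 := by rw [← LL_apply0, h]
  have e1 : g 1 0 * v 0 + g 1 1 * v 1 = v 1 := by rw [← LL_apply1, h]
  have hp := EV_ne hv
  have ht : g 0 0 + g 1 1 = 2 := by
    have : (v 0 ^ 2 + v 1 ^ 2) * (2 - g 0 0 - g 1 1) = 0 := by
      linear_combination (-(v 0 ^ 2 + v 1 ^ 2)) * hd - (v 0 * (1 - g 1 1) + v 1 * g 1 0) * e0
        - (v 1 * (1 - g 0 0) + v 0 * g 0 1) * e1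
    rcases mul_eq_zero.1 this with h | h <;> linarith
  refine ⟨(g 0 1 - g 1 0) / (v 0 ^ 2 + v 1 ^ 2), ?_, ?_, ?_, ?_⟩
  · field_simp
    linear_combination v 0 * e0 - v 1 * e1 + v 1 ^ 2 * ht
  · field_simp
    linear_combination v 1 * e0 + v 0 * e1 - v 0 * v 1 * ht
  · field_simp
    linear_combination v 1 * e0 + v 0 * e1 - v 0 * v 1 * ht
  · field_simp
    linear_combination -v 0 * e0 + v 1 * e1 + v 0 ^ 2 * ht

lemma fix_comm (g h : SL2) (v : EV) (hv : v ≠ 0) (hg : LL g v = v) (hh : LL h v = v) :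
    g * h = h * g := by
  obtain ⟨c, c1, c2, c3, c4⟩ := fix_form g v hv hg
  obtain ⟨d, d1, d2, d3, d4⟩ := fix_form h v hv hh
  apply SL2_ext' <;> simp only [SL2_mul_apply, c1, c2, c3, c4, d1, d2, d3, d4] <;> ring

def fixG (v : EV) : Subgroup SL2 where
  carrier := {g | LL g v = v}
  one_mem' := LL_one_apply v
  mul_mem' := fun {a b} ha hb => by
    show LL (a * b) v = v
    rw [LL_mul_apply, show LL b v = v from hb, show LL a v = v from ha]
  inv_mem' := fun {a} ha => by
    show LL a⁻¹ v = v
    conv_lhs => rw [← show LL a v = v from ha]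
    rw [LL_inv_apply]

def stabG (x : XX) : Subgroup SL2 where
  carrier := {g | av g x = x}
  one_mem' := av_one x
  mul_mem' := fun {a b} ha hb => by
    show av (a * b) x = x
    rw [av_mul, show av b x = x from hb, show av a x = x from ha]
  inv_mem' := fun {a} ha => by
    show av a⁻¹ x = x
    conv_lhs => rw [← show av a x = x from ha]
    rw [← av_mul, inv_mul_cancel, av_one]

lemma stabG_eig {g : SL2} {x : XX} (h : g ∈ stabG x) : ∃ c : ℝ, LL g x.rep = c • x.rep := by
  have h1 : av g x = x := h
  unfold av at h1
  conv_rhs at h1 => rw [← x.mk_rep]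
  rw [Projectivization.mk_eq_mk_iff'] at h1
  obtain ⟨a, ha⟩ := h1
  exact ⟨a, ha.symm⟩

lemma stabG_solv (x : XX) : IsSolvable (stabG x) := by
  have h0 : IsSolvable (fixG x.rep) :=
    isSolvable_of_comm fun a b => Subtype.ext (fix_comm _ _ x.rep x.rep_nonzero a.2 b.2)
  refine solv_of_comm_le _ _ ?_ h0
  intro a ha b hb
  show LL (a * b * a⁻¹ * b⁻¹) x.rep = x.rep
  obtain ⟨p, hp⟩ := stabG_eig ha
  obtain ⟨q, hq⟩ := stabG_eig hb
  obtain ⟨r, hr⟩ := stabG_eig (mul_mem (inv_mem ha) (inv_mem hb))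
  have e1 : LL (a * b) x.rep = LL (b * a) x.rep := by
    rw [LL_mul_apply, LL_mul_apply, hp, hq, map_smul, map_smul, hp, hq, smul_comm]
  rw [mul_assoc, LL_mul_apply, hr, map_smul, e1, ← map_smul, ← hr, ← LL_mul_apply]
  have : b * a * (a⁻¹ * b⁻¹) = 1 := by group
  rw [this, LL_one_apply]

/-- A group preserving a set of at most two lines is solvable. -/
lemma pair_solv (Γ : Subgroup SL2) (a b : XX)
    (h : ∀ g ∈ Γ, ∀ x, x = a ∨ x = b → av g x = a ∨ av g x = b) : IsSolvable Γ := by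
  refine solv_of_comm_le _ _ ?_ (stabG_solv a)
  have dich : ∀ g ∈ Γ, (av g a = a ∧ av g b = b) ∨ (av g a = b ∧ av g b = a) := by
    intro g hg
    by_cases hab : a = b
    · subst hab
      have := h g hg a (Or.inl rfl)
      left; simpa using this
    · have h1 : av g a ≠ av g b := fun e => hab (av_inj g e)
      rcases h g hg a (Or.inl rfl) with h2 | h2 <;> rcases h g hg b (Or.inr rfl) with h3 | h3
      · exact absurd (h2.trans h3.symm) h1
      · exact Or.inl ⟨h2, h3⟩
      · exact Or.inr ⟨h2, h3⟩
      · exact absurd (h2.trans h3.symm) h1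
  intro g hg k hk
  show av (g * k * g⁻¹ * k⁻¹) a = a
  have hx := h (g⁻¹ * k⁻¹) (mul_mem (inv_mem hg) (inv_mem hk)) a (Or.inl rfl)
  set x := av (g⁻¹ * k⁻¹) a with hxd
  have e1 : av (g * k) x = av (k * g) x := by
    rw [av_mul, av_mul]
    rcases dich g hg with ⟨g1, g2⟩ | ⟨g1, g2⟩ <;> rcases dich k hk with ⟨k1, k2⟩ | ⟨k1, k2⟩ <;>
      rcases hx with h3 | h3 <;> rw [h3] <;> simp only [g1, g2, k1, k2]
  rw [mul_assoc, av_mul, ← hxd, e1, hxd, ← av_mul]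
  have : k * g * (g⁻¹ * k⁻¹) = 1 := by group
  rw [this, av_one]

lemma finite_stab_solv (M : Set XX) (hf : M.Finite) (hne : M.Nonempty) (hcard : M.ncard ≤ 2)
    (S0 : Set SL2) (hS0 : ∀ g ∈ S0, ∀ x ∈ M, av g x ∈ M) : IsSolvable (Subgroup.closure S0) := by
  let G : Subgroup SL2 :=
    { carrier := {g | ∀ x ∈ M, av g x ∈ M}
      one_mem' := fun x hx => by rwa [av_one]
      mul_mem' := fun {a b} ha hb x hx => by rw [av_mul]; exact ha _ (hb x hx)
      inv_mem' := fun {a} ha x hx => by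
        obtain ⟨y, hy, rfl⟩ := Set.surj_on_of_inj_on_of_ncard_le (s := M) (t := M)
          (fun y _ => av a y) (fun y hy => ha y hy) (fun y z _ _ h => av_inj a h) le_rfl hf x hx
        rwa [← av_mul, inv_mul_cancel, av_one] }
  have hG : Subgroup.closure S0 ≤ G := (Subgroup.closure_le G).2 fun g hg => hS0 g hg
  obtain ⟨a, b, hM⟩ : ∃ a b, M = {a, b} := by
    obtain ⟨a, ha⟩ := hne
    have h1 : 0 < M.ncard := (Set.ncard_pos hf).2 ⟨a, ha⟩
    rcases (by omega : M.ncard = 1 ∨ M.ncard = 2) with h | h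
    · obtain ⟨b, hb⟩ := Set.ncard_eq_one.1 h
      exact ⟨b, b, by simp [hb]⟩
    · obtain ⟨x, y, _, hxy⟩ := Set.ncard_eq_two.1 h
      exact ⟨x, y, hxy⟩
  refine pair_solv _ a b fun g hg x hx => ?_
  have := hG hg x (by rw [hM]; exact hx)
  rw [hM] at this; exact this


end

section

open scoped ENNReal

lemma perp_closed (v w : EV) : IsClosed {h : SL2 | inner ℝ w (LL h v) = 0} :=
  isClosed_eq (continuous_const.inner (LL_cont.clm_apply continuous_const)) continuous_const

lemma perp_smul (v w : EV) {a : ℝ} (ha : a ≠ 0) :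
    {h : SL2 | inner ℝ w (LL h (a • v)) = 0} = {h : SL2 | inner ℝ w (LL h v) = 0} := by
  ext h; simp [map_smul, inner_smul_right, ha]

lemma stepA (μ : Measure SL2) [IsProbabilityMeasure μ] (hzd : ZariskiDense μ)
    (v w : EV) (hv : v ≠ 0) (hw : w ≠ 0) :
    ∃ N : ℕ, 0 < N ∧
      5 * ∑ n ∈ Finset.range N, nu μ n {h | inner ℝ w (LL h v) = 0} < 2 * (N : ℝ≥0∞) := by
  by_contra hcon
  push Not at hcon
  set A : XX → Set SL2 := fun x => {h | inner ℝ w (LL h x.rep) = 0} with hA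
  have hAm : ∀ x, MeasurableSet (A x) := fun x => (perp_closed x.rep w).measurableSet
  have hAmk : ∀ (u : EV) (hu : u ≠ 0), A (Projectivization.mk ℝ u hu) =
      {h | inner ℝ w (LL h u) = 0} := by
    intro u hu
    obtain ⟨a, ha⟩ := Projectivization.exists_smul_eq_mk_rep ℝ u hu
    rw [hA]; dsimp only
    rw [← ha, Units.smul_def]
    exact perp_smul u w a.ne_zero
  have hAact : ∀ g x, A (av g x) = {h | h * g ∈ A x} := by
    intro g x
    rw [av, hAmk]
    ext h; simp [hA, LL_mul_apply]
  have hAdis : Pairwise (Function.onFun Disjoint A) := by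
    intro x y hxy
    refine Set.disjoint_left.2 fun h hx hy => hxy ?_
    exact av_inj h (perp_eq w _ _ hw (LL_ne h x.rep_nonzero) (LL_ne h y.rep_nonzero) hx hy)
  -- averages
  set F : ℕ → XX → ℝ≥0∞ := fun N x =>
    ((N + 1 : ℕ) : ℝ≥0∞)⁻¹ * ∑ n ∈ Finset.range (N + 1), nu μ n (A x) with hF
  have hN0 : ∀ N : ℕ, ((N + 1 : ℕ) : ℝ≥0∞) ≠ 0 := fun N => by simp
  have hNt : ∀ N : ℕ, ((N + 1 : ℕ) : ℝ≥0∞) ≠ ⊤ := fun N => ENNReal.natCast_ne_top _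
  have hFsum : ∀ N (S : Finset XX), ∑ x ∈ S, F N x ≤ 1 := by
    intro N S
    rw [hF]; dsimp only
    rw [← Finset.mul_sum, Finset.sum_comm]
    calc _ ≤ ((N + 1 : ℕ) : ℝ≥0∞)⁻¹ * ∑ n ∈ Finset.range (N + 1), 1 := by
          refine mul_le_mul_right (Finset.sum_le_sum fun n _ => ?_) _
          refine (sum_measure_le_measure_univ (fun x _ => (hAm x).nullMeasurableSet)
            (fun x _ y _ hxy => (hAdis hxy).aedisjoint)).trans (by simp)
      _ = 1 := by
          simp only [Finset.sum_const, Finset.card_range, nsmul_eq_mul, mul_one]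
          exact ENNReal.inv_mul_cancel (hN0 N) (hNt N)
  have hF1 : ∀ N x, F N x ≤ 1 := fun N x => by simpa using hFsum N {x}
  have hstep : ∀ n x, nu μ (n + 1) (A x) = ∫⁻ h, nu μ n (A (av h x)) ∂μ := by
    intro n x
    rw [nu_add_apply μ n 1 (hAm x), nu_one]
    simp_rw [hAact]
  have hmeas : ∀ n x, Measurable fun h => nu μ n (A (av h x)) := by
    intro n x
    simp_rw [hAact]
    have : MeasurableSet {p : SL2 × SL2 | p.2 * p.1 ∈ A x} :=
      (hAm x).preimage (measurable_snd.mul measurable_fst)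
    exact measurable_measure_prodMk_left this
  have hFm : ∀ N x, Measurable fun h => F N (av h x) := by
    intro N x
    exact (Finset.measurable_fun_sum _ fun n _ => hmeas n x).const_mul _
  have hFint : ∀ N x, F N x ≤ ∫⁻ h, F N (av h x) ∂μ + ((N + 1 : ℕ) : ℝ≥0∞)⁻¹ := by
    intro N x
    have e : ∫⁻ h, F N (av h x) ∂μ =
        ((N + 1 : ℕ) : ℝ≥0∞)⁻¹ * ∑ n ∈ Finset.range (N + 1), nu μ (n + 1) (A x) := by
      rw [hF]; dsimp only
      rw [lintegral_const_mul _ (Finset.measurable_fun_sum _ fun n _ => hmeas n x),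
        lintegral_finset_sum _ (fun n _ => hmeas n x)]
      simp_rw [hstep]
    rw [e]
    have e2 : ((N + 1 : ℕ) : ℝ≥0∞)⁻¹ * ∑ n ∈ Finset.range (N + 1), nu μ (n + 1) (A x) +
        ((N + 1 : ℕ) : ℝ≥0∞)⁻¹ = ((N + 1 : ℕ) : ℝ≥0∞)⁻¹ *
        (∑ n ∈ Finset.range (N + 1), nu μ (n + 1) (A x) + 1) := by rw [mul_add, mul_one]
    rw [e2]
    refine mul_le_mul_right ?_ _
    rw [Finset.sum_range_succ']
    refine add_le_add ?_ prob_le_one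
    exact Finset.sum_le_sum_of_subset (Finset.range_mono (Nat.le_succ N))
  -- countable set of relevant lines
  set D : Set XX := ⋃ n, {x | 0 < nu μ n (A x)} with hD
  have hDc : D.Countable := Set.countable_iUnion fun n =>
    Measure.countable_meas_pos_of_disjoint_iUnion hAm hAdis
  have hDz : ∀ x ∉ D, ∀ N, F N x = 0 := by
    intro x hx N
    rw [hF]; dsimp only
    rw [Finset.sum_eq_zero, mul_zero]
    intro n _
    by_contra h
    exact hx (Set.mem_iUnion.2 ⟨n, pos_iff_ne_zero.2 h⟩)
  have : Countable D := hDc.to_subtype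
  obtain ⟨ψ0, θ, hθ, hlim0⟩ := CompactSpace.tendsto_subseq (fun N : ℕ => fun x : D => F N x)
  obtain ⟨ψ, hlim⟩ : ∃ ψ : XX → ℝ≥0∞, ∀ x, Tendsto (fun k => F (θ k) x) atTop (nhds (ψ x)) := by
    classical
    refine ⟨fun x => if hx : x ∈ D then ψ0 ⟨x, hx⟩ else 0, fun x => ?_⟩
    by_cases hx : x ∈ D
    · simp only [hx, dif_pos]
      exact (tendsto_pi_nhds.1 hlim0) ⟨x, hx⟩
    · simp only [hx, dif_neg, not_false_eq_true, hDz x hx]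
      exact tendsto_const_nhds
  have hψ1 : ∀ x, ψ x ≤ 1 := fun x => le_of_tendsto' (hlim x) fun k => hF1 _ x
  have hψsum : ∀ S : Finset XX, ∑ x ∈ S, ψ x ≤ 1 := fun S =>
    le_of_tendsto' (tendsto_finset_sum S fun x _ => hlim x) fun k => hFsum _ S
  have hψm : ∀ x, Measurable fun h => ψ (av h x) := fun x =>
    measurable_of_tendsto_metrizable (f := fun k h => F (θ k) (av h x)) (fun k => hFm _ x)
      (tendsto_pi_nhds.2 fun h => hlim _)
  have hψint : ∀ x, ψ x ≤ ∫⁻ h, ψ (av h x) ∂μ := by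
    intro x
    have h1 : Tendsto (fun k => ∫⁻ h, F (θ k) (av h x) ∂μ) atTop (nhds (∫⁻ h, ψ (av h x) ∂μ)) :=
      tendsto_lintegral_of_dominated_convergence (fun _ => 1) (fun k => hFm _ x)
        (fun k => Eventually.of_forall fun h => hF1 _ _) (by simp)
        (Eventually.of_forall fun h => hlim _)
    have h2 : Tendsto (fun k => ((θ k + 1 : ℕ) : ℝ≥0∞)⁻¹) atTop (nhds 0) :=
      ENNReal.tendsto_inv_nat_nhds_zero.comp ((tendsto_add_atTop_nat 1).comp hθ.tendsto_atTop)
    have h3 := h1.add h2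
    rw [add_zero] at h3
    exact le_of_tendsto_of_tendsto' (hlim x) h3 fun k => hFint _ x
  set x0 : XX := Projectivization.mk ℝ v hv with hx0
  have hψ0 : 2 ≤ 5 * ψ x0 := by
    have h5 : Tendsto (fun k => 5 * F (θ k) x0) atTop (nhds (5 * ψ x0)) :=
      ENNReal.Tendsto.const_mul (hlim x0) (Or.inr (by simp))
    refine ge_of_tendsto' h5 fun k => ?_
    have h6 := hcon (θ k + 1) (Nat.succ_pos _)
    rw [← hAmk v hv] at h6
    calc (2 : ℝ≥0∞) = ((θ k + 1 : ℕ) : ℝ≥0∞)⁻¹ * (2 * ((θ k + 1 : ℕ) : ℝ≥0∞)) := by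
          rw [mul_comm 2, ← mul_assoc, ENNReal.inv_mul_cancel (hN0 _) (hNt _), one_mul]
      _ ≤ ((θ k + 1 : ℕ) : ℝ≥0∞)⁻¹ * (5 * ∑ n ∈ Finset.range (θ k + 1), nu μ n (A x0)) :=
          mul_le_mul_right h6 _
      _ = _ := by rw [hF]; dsimp only; ring
  clear_value F A
  set T : Set XX := {x | 2 ≤ 5 * ψ x} with hT
  have hTcard : ∀ S : Finset XX, (S : Set XX) ⊆ T → S.card ≤ 2 := by
    intro S hS
    have h1 : ∑ x ∈ S, (2 : ℝ≥0∞) ≤ ∑ x ∈ S, 5 * ψ x := Finset.sum_le_sum fun x hx => hS hx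
    rw [← Finset.mul_sum] at h1
    have h2 : ∑ x ∈ S, (2 : ℝ≥0∞) ≤ 5 * 1 := h1.trans (mul_le_mul_right (hψsum S) _)
    simp only [Finset.sum_const, nsmul_eq_mul, mul_one] at h2
    have h3 : S.card * 2 ≤ 5 := by exact_mod_cast h2
    omega
  have hTf : T.Finite := by
    by_contra hinf
    obtain ⟨S, hS, hc⟩ := Set.Infinite.exists_subset_card_eq hinf 3
    have := hTcard S hS
    omega
  obtain ⟨a, haT, hamax⟩ := Set.exists_max_image T ψ hTf ⟨x0, hψ0⟩
  have hmax : ∀ x, ψ x ≤ ψ a := by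
    intro x
    by_cases hx : x ∈ T
    · exact hamax x hx
    · have h1 : 5 * ψ x < 2 := not_le.1 hx
      have h2 : 5 * ψ x ≤ 5 * ψ a := h1.le.trans haT
      exact (ENNReal.mul_le_mul_iff_right (by simp) (by simp)).1 h2
  set M : Set XX := {x | ψ x = ψ a} with hM
  have hMT : M ⊆ T := by
    intro x hx
    have : ψ x = ψ a := hx
    show 2 ≤ 5 * ψ x
    rw [this]; exact haT
  have hMf := hTf.subset hMT
  refine hzd (finite_stab_solv M hMf ⟨a, rfl⟩ ?_ _ ?_)
  · have := hTcard hMf.toFinset (by simpa using hMT)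
    rwa [← Set.ncard_eq_toFinset_card M hMf] at this
  · intro g hg x hx
    have hx' : ψ x = ψ a := hx
    have hae : (fun h => ψ (av h x)) =ᵐ[μ] fun _ => ψ a := by
      refine ae_eq_of_ae_le_of_lintegral_le (Eventually.of_forall fun h => hmax _) ?_
        aemeasurable_const ?_
      · refine ((lintegral_mono fun h => hψ1 (av h x)).trans_lt ?_).ne
        simp
      · have := hψint x
        rw [hx'] at this
        simpa using this
    have hcl : IsClosed {h : SL2 | av h x ∈ M} := by
      have e : {h : SL2 | av h x ∈ M} = ⋃ y ∈ M, {h | inner ℝ (JJ y.rep) (LL h x.rep) = 0} := by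
        ext h
        simp only [Set.mem_setOf_eq, Set.mem_iUnion]
        have key : ∀ y : XX, inner ℝ (JJ y.rep) (LL h x.rep) = 0 ↔ av h x = y := by
          intro y
          rw [par_iff _ _ y.rep_nonzero (LL_ne h x.rep_nonzero), y.mk_rep]; rfl
        simp [key]
      rw [e]
      exact hMf.isClosed_biUnion fun y _ => perp_closed _ _
    refine supp_sub μ hcl ?_ hg
    filter_upwards [hae] with h hh using hh


end

section

open scoped ENNReal

def AA (η : ℝ) (v w : EV) : Set SL2 := {h | |inner ℝ w (LL h v)| ≤ η * ‖LL h v‖}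

lemma AA_meas (η : ℝ) (v w : EV) : MeasurableSet (AA η v w) := inner_meas v w η

lemma AA_mono {η η' : ℝ} (h : η ≤ η') (v w : EV) : AA η v w ⊆ AA η' v w := fun _ hg =>
  le_trans hg (mul_le_mul_of_nonneg_right h (norm_nonneg _))

lemma AA_smul (η : ℝ) (v w : EV) {a : ℝ} (ha : 0 < a) : AA η (a • v) w = AA η v w := by
  ext h
  simp only [AA, Set.mem_ofPred_eq, map_smul, inner_smul_right, abs_mul, norm_smul,
    abs_of_pos ha, Real.norm_eq_abs]
  rw [show η * (a * ‖LL h v‖) = a * (η * ‖LL h v‖) by ring]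
  exact mul_le_mul_iff_right₀ ha

lemma stepB_local (μ : Measure SL2) [IsProbabilityMeasure μ] (hzd : ZariskiDense μ)
    (v w : EV) (hv : ‖v‖ = 1) (hw : ‖w‖ = 1) :
    ∃ N : ℕ, 0 < N ∧ ∃ r : ℝ, 0 < r ∧ r ≤ 1 ∧ ∀ v' w' : EV, ‖v' - v‖ < r → ‖w' - w‖ < r →
      5 * ∑ n ∈ Finset.range N, nu μ n (AA r v' w') ≤ 2 * (N : ℝ≥0∞) := by
  obtain ⟨N, hN, hlt⟩ := stepA μ hzd v w (norm_pos_iff.1 (by rw [hv]; exact one_pos))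
    (norm_pos_iff.1 (by rw [hw]; exact one_pos))
  set B : ℕ → Set SL2 := fun k => {h | |inner ℝ w (LL h v)| ≤ 1 / ((k:ℝ) + 1) * ‖LL h‖} with hB
  have hBc : ∀ k, IsClosed (B k) := fun k =>
    isClosed_le (continuous_const.inner (LL_cont.clm_apply continuous_const)).abs
      (continuous_const.mul LL_cont.norm)
  have hBa : Antitone B := by
    intro i j hij h hh
    refine le_trans (show |inner ℝ w (LL h v)| ≤ 1 / ((j:ℝ) + 1) * ‖LL h‖ from hh) ?_
    exact mul_le_mul_of_nonneg_right (Nat.one_div_le_one_div hij) (norm_nonneg _)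
  have hBi : ⋂ k, B k = {h | inner ℝ w (LL h v) = 0} := by
    ext h
    rw [Set.mem_iInter]
    constructor
    · intro hh
      have h1 : Tendsto (fun k : ℕ => 1 / ((k:ℝ) + 1) * ‖LL h‖) atTop (nhds (0 * ‖LL h‖)) :=
        tendsto_one_div_add_atTop_nhds_zero_nat.mul_const _
      rw [zero_mul] at h1
      exact abs_nonpos_iff.1 (ge_of_tendsto' h1 hh)
    · intro hh k
      have : inner ℝ w (LL h v) = 0 := hh
      show |inner ℝ w (LL h v)| ≤ 1 / ((k:ℝ) + 1) * ‖LL h‖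
      rw [this, abs_zero]; positivity
  have hlim : Tendsto (fun k => 5 * ∑ n ∈ Finset.range N, nu μ n (B k)) atTop
      (nhds (5 * ∑ n ∈ Finset.range N, nu μ n {h | inner ℝ w (LL h v) = 0})) := by
    refine ENNReal.Tendsto.const_mul (tendsto_finsetSum _ fun n _ => ?_) (Or.inr (by simp))
    rw [← hBi]
    exact tendsto_measure_iInter_atTop (fun k => (hBc k).measurableSet.nullMeasurableSet) hBa
      ⟨0, measure_ne_top _ _⟩
  obtain ⟨k, hk⟩ := (hlim.eventually (gt_mem_nhds hlt)).exists
  have hk1 : (0:ℝ) < (k:ℝ) + 1 := by positivity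
  refine ⟨N, hN, 1 / (8 * ((k:ℝ) + 1)), by positivity, ?_, fun v' w' hv' hw' => ?_⟩
  · rw [div_le_one (by positivity)]
    have : (0:ℝ) ≤ k := by positivity
    linarith
  refine le_trans (mul_le_mul_right (Finset.sum_le_sum fun n _ => measure_mono ?_) _) hk.le
  intro h hh
  set r : ℝ := 1 / (8 * ((k:ℝ) + 1)) with hr
  have hr0 : 0 < r := by positivity
  have hr1 : r ≤ 1 := by
    rw [hr, div_le_one (by positivity)]
    have : (0:ℝ) ≤ k := by positivity
    linarith
  have hr8 : 1 / ((k:ℝ) + 1) = 8 * r := by rw [hr]; field_simp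
  show |inner ℝ w (LL h v)| ≤ 1 / ((k:ℝ) + 1) * ‖LL h‖
  rw [hr8]
  have hv2 : ‖v'‖ ≤ 2 := by
    have := norm_add_le (v' - v) v
    rw [sub_add_cancel, hv] at this
    linarith
  have hL := norm_nonneg (LL h)
  have hLv : ‖LL h v'‖ ≤ 2 * ‖LL h‖ := by
    have := (LL h).le_opNorm v'
    nlinarith
  have e : inner ℝ w (LL h v) = inner ℝ w' (LL h v') - inner ℝ (w' - w) (LL h v')
      - inner ℝ w (LL h (v' - v)) := by
    rw [map_sub, inner_sub_left, inner_sub_right]; ring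
  have h1 : |inner ℝ w' (LL h v')| ≤ r * ‖LL h v'‖ := hh
  have h2 : |inner ℝ (w' - w) (LL h v')| ≤ r * ‖LL h v'‖ :=
    (abs_real_inner_le_norm _ _).trans (mul_le_mul_of_nonneg_right hw'.le (norm_nonneg _))
  have h3 : |inner ℝ w (LL h (v' - v))| ≤ r * ‖LL h‖ := by
    refine (abs_real_inner_le_norm _ _).trans ?_
    rw [hw, one_mul]
    refine ((LL h).le_opNorm _).trans ?_
    rw [mul_comm]
    exact mul_le_mul_of_nonneg_right hv'.le hL
  rw [e]
  have h4 := abs_sub (inner ℝ w' (LL h v') - inner ℝ (w' - w) (LL h v')) (inner ℝ w (LL h (v' - v)))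
  have h5 := abs_sub (inner ℝ w' (LL h v')) (inner ℝ (w' - w) (LL h v'))
  have h6 : r * ‖LL h v'‖ ≤ r * (2 * ‖LL h‖) := mul_le_mul_of_nonneg_left hLv hr0.le
  nlinarith

lemma stepB_unif (μ : Measure SL2) [IsProbabilityMeasure μ] (hzd : ZariskiDense μ) :
    ∃ L : ℕ, ∃ η : ℝ, 0 < η ∧ η ≤ 1 ∧ ∀ v w : EV, v ≠ 0 → ‖w‖ = 1 → ∃ N : ℕ, 0 < N ∧ N ≤ L ∧
      5 * ∑ n ∈ Finset.range N, nu μ n (AA η v w) ≤ 2 * (N : ℝ≥0∞) := by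
  have hK : IsCompact (Metric.sphere (0 : EV) 1 ×ˢ Metric.sphere (0 : EV) 1) :=
    (isCompact_sphere _ _).prod (isCompact_sphere _ _)
  obtain ⟨L, η, hη, hη1, h⟩ := hK.induction_on (p := fun S => ∃ L : ℕ, ∃ η : ℝ, 0 < η ∧ η ≤ 1 ∧
      ∀ q ∈ S, ∃ N : ℕ, 0 < N ∧ N ≤ L ∧
      5 * ∑ n ∈ Finset.range N, nu μ n (AA η q.1 q.2) ≤ 2 * (N : ℝ≥0∞))
    ⟨0, 1, one_pos, le_rfl, fun q hq => absurd hq (Set.notMem_empty q)⟩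
    (fun s t hst ⟨L, η, h1, h2, h3⟩ => ⟨L, η, h1, h2, fun q hq => h3 q (hst hq)⟩)
    (by
      rintro s t ⟨L, η, h1, h2, h3⟩ ⟨L', η', h1', h2', h3'⟩
      refine ⟨max L L', min η η', lt_min h1 h1', (min_le_left _ _).trans h2, ?_⟩
      rintro q (hq | hq)
      · obtain ⟨N, hN, hNL, hs⟩ := h3 q hq
        refine ⟨N, hN, hNL.trans (le_max_left _ _), le_trans ?_ hs⟩
        exact mul_le_mul_right (Finset.sum_le_sum fun n _ =>
          measure_mono (AA_mono (min_le_left _ _) _ _)) _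
      · obtain ⟨N, hN, hNL, hs⟩ := h3' q hq
        refine ⟨N, hN, hNL.trans (le_max_right _ _), le_trans ?_ hs⟩
        exact mul_le_mul_right (Finset.sum_le_sum fun n _ =>
          measure_mono (AA_mono (min_le_right _ _) _ _)) _)
    (by
      rintro ⟨v, w⟩ ⟨hv, hw⟩
      have hv' : ‖v‖ = 1 := by simpa using hv
      have hw' : ‖w‖ = 1 := by simpa using hw
      obtain ⟨N, hN, r, hr, hr1, h⟩ := stepB_local μ hzd v w hv' hw'
      refine ⟨Metric.ball (v, w) r, mem_nhdsWithin_of_mem_nhds (Metric.ball_mem_nhds _ hr), N, r,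
        hr, hr1, fun q hq => ⟨N, hN, le_rfl, h q.1 q.2 ?_ ?_⟩⟩
      · rw [← dist_eq_norm]
        exact (le_max_left _ _).trans_lt (Metric.mem_ball.1 hq)
      · rw [← dist_eq_norm]
        exact (le_max_right _ _).trans_lt (Metric.mem_ball.1 hq))
  refine ⟨L, η, hη, hη1, fun v w hv hw => ?_⟩
  have hn : 0 < ‖v‖ := norm_pos_iff.2 hv
  have := h (‖v‖⁻¹ • v, w) ⟨by simp [norm_smul, hn.ne'], by simpa using hw⟩
  simpa only [AA_smul η v w (inv_pos.2 hn)] using this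

lemma stepB (μ : Measure SL2) [IsProbabilityMeasure μ] (hzd : ZariskiDense μ) :
    ∃ N : ℕ, 0 < N ∧ ∃ η : ℝ, 0 < η ∧ η ≤ 1 ∧ ∀ v w : EV, v ≠ 0 → ‖w‖ = 1 →
      ∑ n ∈ Finset.range N, (nu μ n).real {h | |inner ℝ w (LL h v)| ≤ η * ‖LL h v‖} ≤
        9 / 20 * N := by
  obtain ⟨L, η, hη, hη1, h⟩ := stepB_unif μ hzd
  have hind : ∀ w : EV, ‖w‖ = 1 → ∀ M : ℕ, ∀ v : EV, v ≠ 0 →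
      5 * ∑ n ∈ Finset.range M, nu μ n (AA η v w) ≤ 2 * (M : ℝ≥0∞) + 5 * L := by
    intro w hw M
    induction M using Nat.strong_induction_on with
    | _ M ih =>
    intro v hv
    by_cases hML : M ≤ L
    · have h1 : ∑ n ∈ Finset.range M, nu μ n (AA η v w) ≤ ∑ n ∈ Finset.range M, 1 :=
        Finset.sum_le_sum fun n _ => prob_le_one
      simp only [Finset.sum_const, Finset.card_range, nsmul_eq_mul, mul_one] at h1
      have h2 : (M : ℝ≥0∞) ≤ L := by exact_mod_cast hML
      exact (mul_le_mul_right (h1.trans h2) 5).trans le_add_self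
    · push Not at hML
      obtain ⟨N, hN, hNL, hs⟩ := h v w hv hw
      obtain ⟨M', rfl⟩ : ∃ M', M = N + M' := ⟨M - N, by omega⟩
      rw [Finset.sum_range_add, mul_add]
      have h1 : ∑ n ∈ Finset.range M', nu μ (N + n) (AA η v w) =
          ∫⁻ g, ∑ n ∈ Finset.range M', nu μ n (AA η (LL g v) w) ∂(nu μ N) := by
        have hset : ∀ g, AA η (LL g v) w = {h' | h' * g ∈ AA η v w} := by
          intro g; ext k; simp [AA, LL_mul_apply]
        simp_rw [hset]
        rw [lintegral_finsetSum]
        · refine Finset.sum_congr rfl fun n _ => ?_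
          rw [add_comm N n, nu_add_apply μ n N (AA_meas η v w)]
        · intro n _
          have : MeasurableSet {p : SL2 × SL2 | p.2 * p.1 ∈ AA η v w} :=
            (AA_meas η v w).preimage (measurable_snd.mul measurable_fst)
          exact measurable_measure_prodMk_left this
      have h2 : 5 * ∑ n ∈ Finset.range M', nu μ (N + n) (AA η v w) ≤ 2 * (M' : ℝ≥0∞) + 5 * L := by
        rw [h1, ← lintegral_const_mul' _ _ (by simp)]
        calc _ ≤ ∫⁻ g, (2 * (M' : ℝ≥0∞) + 5 * L) ∂(nu μ N) :=
              lintegral_mono fun g => ih M' (by omega) (LL g v) (LL_ne g hv)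
          _ = _ := by simp
      refine (add_le_add hs h2).trans (le_of_eq ?_)
      push_cast; ring
  have hL : 0 < L := by
    obtain ⟨N, hN, hNL, -⟩ := h (EuclideanSpace.single 0 1) (EuclideanSpace.single 0 1)
      (norm_pos_iff.1 (by simp)) (by simp)
    omega
  refine ⟨20 * L, by omega, η, hη, hη1, fun v w hv hw => ?_⟩
  have h1 := hind w hw (20 * L) v hv
  have h2 : ((5 * ∑ n ∈ Finset.range (20 * L), nu μ n (AA η v w)).toReal) ≤ 45 * L := by
    have h3 : 5 * ∑ n ∈ Finset.range (20 * L), nu μ n (AA η v w) ≤ ((45 * L : ℕ) : ℝ≥0∞) := by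
      refine h1.trans (le_of_eq ?_)
      push_cast; ring
    have := ENNReal.toReal_mono (ENNReal.natCast_ne_top _) h3
    simpa using this
  rw [ENNReal.toReal_mul, ENNReal.toReal_sum (fun n _ => measure_ne_top _ _)] at h2
  have h4 : ∑ n ∈ Finset.range (20 * L), (nu μ n).real (AA η v w) ≤ 9 * L := by
    simp only [measureReal_def]
    simp at h2
    linarith
  refine le_trans h4 (le_of_eq ?_)
  push_cast; ring


end

theorem renewal_cartan_uniform_bound
    (μ : Measure SL2) [IsProbabilityMeasure μ]
    (hmom : HasExpMoment μ) (hzd : ZariskiDense μ) :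
    ∃ C > (0 : ℝ), ∀ s t : ℝ,
      (∑' n : ℕ, μpi μ n {g | kappa (word g) - t ∈ Set.Icc 0 s}) ≤
        ENNReal.ofReal (C * max 1 (s ^ 2)) := by
  obtain ⟨K, hK0, hK⟩ := stepE μ hmom (stepD μ hmom (stepB μ hzd) (stepC μ hmom hzd))
  exact final_step μ K hK0 hK

end
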